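/- arXiv:1811.11219 — 8 statements merged into one kernel-verified Lean document; each statement's English description precedes it below -/
import Mathlib

section
/- For all nonnegative integers n, r, s, the number of partitions π of n such that π has exactly r odd parts and the conjugate partition π′ has exactly s odd parts is equal to the number of partitions of n having exactly s odd parts and such that twice the number of parts congruent to 2 modulo 4 plus the number of distinct odd integers occurring with odd multiplicity equals r. -/
/-- A partition, modeled as a nonincreasing function `ℕ → ℕ` (the `i`-th value is the
`(i+1)`-st term of the sequence) with only finitely many nonzero terms. -/
def IsPartitionFun (f : ℕ → ℕ) : Prop :=
  (∀ i j, i ≤ j → f j ≤ f i) ∧ ∃ N, ∀ i, N ≤ i → f i = 0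

/-- The sum of the parts of a partition. -/
noncomputable def partSum (f : ℕ → ℕ) : ℕ := ∑' i, f i

/-- The number of odd parts of a partition. -/
noncomputable def oddParts (f : ℕ → ℕ) : ℕ := {i | Odd (f i)}.ncard

/-- The conjugate partition: its `(i+1)`-st term is the number of parts of `f` that
are at least `i+1`. -/
noncomputable def conjFun (f : ℕ → ℕ) : ℕ → ℕ := fun i => {j | i + 1 ≤ f j}.ncard

/-- The multiplicity of `k` as a part of `f`. -/
noncomputable def multiplicity' (f : ℕ → ℕ) (k : ℕ) : ℕ := {i | f i = k}.ncard

/-!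
Pairs of equal odd parts can be peeled off any partition `τ` until a partition `ρ` without repeated
odd parts is left, and `τ` is determined by `ρ` and the removed pairs. Apply this twice, to a
partition `τ` counted on the right and to the conjugate `λ'` of a partition `λ` counted on the left.

* On the conjugate side, adjoining a pair of parts `2 i + 1` to `λ'` adds `2` to each of the first
  `2 i + 1` rows of `λ`. So removing all pairs leaves `ν` with `λ ≡ ν` rowwise modulo `2`, and
  `ν'` has no repeated odd part, i.e. `ν_{2i} - ν_{2i+1} ≤ 1` (indexing from `0`).
* Such `ν` correspond to the `ρ` without repeated odd parts by `ρ_i = ν_{2i} + ν_{2i+1}`; inversely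
  each part `k` of `ρ` is split as `⌈k/2⌉, ⌊k/2⌋`. An odd `k` yields one odd row of `ν`, a part
  `k ≡ 2 [MOD 4]` two, and a multiple of `4` none; and `ν'` has as many odd parts as `ρ`.

Matching `λ` with `τ` when they have the same `ρ` and the same removed pairs proves the identity:
the pairs contribute equally to the size and to the odd parts of `λ'` and of `τ`, and the odd
integers of odd multiplicity in `τ` are exactly the odd parts of `ρ`.
-/

theorem ncard_sep_eq_of_bijOn {α β γ : Type*} {s : Set α} {t : Set β} {u : Set γ}
    {F : α → β} {G : α → γ} (hF : Set.BijOn F s t) (hG : Set.BijOn G s u)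
    {p : β → Prop} {q : γ → Prop} (hpq : ∀ a ∈ s, (p (F a) ↔ q (G a))) :
    {b ∈ t | p b}.ncard = {c ∈ u | q c}.ncard := by
  rw [← (hF.subset_right (Set.sep_subset t p)).ncard_eq,
    ← (hG.subset_right (Set.sep_subset u q)).ncard_eq]
  congr 1
  ext a
  refine and_congr_right fun ha => ?_
  exact and_congr (iff_of_true (hF.mapsTo ha) (hG.mapsTo ha)) (hpq a ha)

theorem ncard_setOf_eq_tsum {α : Type*} {p : α → Prop} [DecidablePred p]
    (hp : {i | p i}.Finite) :
    {i | p i}.ncard = ∑' i, if p i then 1 else 0 := by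
  rw [tsum_eq_sum (s := hp.toFinset) (fun i hi => if_neg (by simpa using hi)),
    Set.ncard_eq_toFinset_card _ hp, Finset.card_eq_sum_ones]
  exact Finset.sum_congr rfl fun i hi => (if_pos (by simpa using hi)).symm

section Partitions

variable {f g : ℕ → ℕ}

theorem IsPartitionFun.antitone (hf : IsPartitionFun f) : Antitone f :=
  fun i j hij => hf.1 i j hij

theorem IsPartitionFun.of_succ_le {N : ℕ} (hf : ∀ i, f (i + 1) ≤ f i)
    (hN : ∀ i, N ≤ i → f i = 0) : IsPartitionFun f :=
  ⟨fun _ _ hij => antitone_nat_of_succ_le hf hij, N, hN⟩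

protected theorem IsPartitionFun.add (hf : IsPartitionFun f) (hg : IsPartitionFun g) :
    IsPartitionFun (f + g) := by
  obtain ⟨N, hN⟩ := hf.2
  obtain ⟨M, hM⟩ := hg.2
  refine ⟨fun i j hij => add_le_add (hf.1 i j hij) (hg.1 i j hij), max N M, fun i hi => ?_⟩
  simp [hN i (le_of_max_le_left hi), hM i (le_of_max_le_right hi)]

theorem IsPartitionFun.finite_setOf (hf : IsPartitionFun f) {p : ℕ → Prop} (hp : ¬ p 0) :
    {i | p (f i)}.Finite := by
  obtain ⟨N, hN⟩ := hf.2
  refine (Set.finite_Iio N).subset fun i (hi : p (f i)) => ?_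
  by_contra hiN
  exact hp (hN i (not_lt.1 hiN) ▸ hi)

theorem IsPartitionFun.summable_comp (hf : IsPartitionFun f) {φ : ℕ → ℕ} (hφ : φ 0 = 0) :
    Summable fun i => φ (f i) :=
  summable_of_hasFiniteSupport (hf.finite_setOf (p := fun k => φ k ≠ 0) (by simpa using hφ))

theorem partSum_add (hf : IsPartitionFun f) (hg : IsPartitionFun g) :
    partSum (f + g) = partSum f + partSum g :=
  (hf.summable_comp (φ := id) rfl).tsum_add (hg.summable_comp (φ := id) rfl)

theorem partSum_eq_sum_range {N : ℕ} (hN : ∀ i, N ≤ i → f i = 0) :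
    partSum f = ∑ i ∈ Finset.range N, f i :=
  tsum_eq_sum fun i hi => hN i (by simpa using hi)

theorem IsPartitionFun.eq_of_sub_succ_eq (hf : IsPartitionFun f) (hg : IsPartitionFun g)
    (h : ∀ i, f i - f (i + 1) = g i - g (i + 1)) : f = g := by
  obtain ⟨N, hN⟩ := hf.2
  obtain ⟨M, hM⟩ := hg.2
  have eq_of_le : ∀ d i, max N M ≤ i + d → f i = g i := by
    intro d
    induction d with
    | zero => intro i hi; rw [hN i (by omega), hM i (by omega)]
    | succ d ih =>
      intro i hi
      have hsucc := ih (i + 1) (by omega)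
      have hfi : f (i + 1) ≤ f i := hf.antitone i.le_succ
      have hgi : g (i + 1) ≤ g i := hg.antitone i.le_succ
      have hdiff := h i
      omega
  exact funext fun i => eq_of_le (max N M) i (by omega)

theorem exists_isPartitionFun_eq_add_succ {x : ℕ → ℕ} {N : ℕ} (hN : ∀ i, N ≤ i → x i = 0) :
    ∃ f, IsPartitionFun f ∧ ∀ i, f i = x i + f (i + 1) := by
  have hrec : ∀ i, ∑ j ∈ Finset.Ico i N, x j = x i + ∑ j ∈ Finset.Ico (i + 1) N, x j := by
    intro i
    rcases lt_or_ge i N with hi | hi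
    · exact Finset.sum_eq_sum_Ico_succ_bot hi x
    · simp [Finset.Ico_eq_empty_of_le hi, Finset.Ico_eq_empty_of_le (Nat.le_succ_of_le hi), hN i hi]
  refine ⟨fun i => ∑ j ∈ Finset.Ico i N, x j,
    .of_succ_le (N := N) (fun i => ?_) fun i hi => ?_, hrec⟩
  · exact (hrec i).symm ▸ Nat.le_add_left _ _
  · simp [Finset.Ico_eq_empty_of_le hi]

end Partitions

section Conjugate

variable {f g : ℕ → ℕ}

theorem IsPartitionFun.lt_conjFun_iff (hf : IsPartitionFun f) {i k : ℕ} :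
    i < conjFun f k ↔ k < f i := by
  obtain ⟨N, hN⟩ := hf.2
  have hex : ∃ j, f j ≤ k := ⟨N, by simp [hN N le_rfl]⟩
  have mem_iff : ∀ j, k < f j ↔ j < Nat.find hex := fun j => by
    rw [Nat.lt_find_iff]
    exact ⟨fun hj m hm => not_le.2 (hj.trans_le (hf.antitone hm)), fun h => not_le.1 (h j le_rfl)⟩
  have hset : {j | k + 1 ≤ f j} = ↑(Finset.range (Nat.find hex)) := by
    ext j
    simpa using mem_iff j
  rw [conjFun, hset, Set.ncard_coe_finset, Finset.card_range, mem_iff]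

theorem IsPartitionFun.conjFun_le_iff (hf : IsPartitionFun f) {i k : ℕ} :
    conjFun f k ≤ i ↔ f i ≤ k := by
  simpa using hf.lt_conjFun_iff.not

theorem IsPartitionFun.conjFun_eq_succ_iff (hf : IsPartitionFun f) {i k : ℕ} :
    conjFun f i = k + 1 ↔ f (k + 1) ≤ i ∧ i < f k := by
  rw [← hf.conjFun_le_iff, ← hf.lt_conjFun_iff]
  omega

protected theorem IsPartitionFun.conjFun (hf : IsPartitionFun f) :
    IsPartitionFun (conjFun f) := by
  refine .of_succ_le (N := f 0) (fun k => ?_) fun k hk => ?_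
  · exact hf.conjFun_le_iff.2 ((hf.conjFun_le_iff.1 le_rfl).trans k.le_succ)
  · exact Nat.le_zero.1 (hf.conjFun_le_iff.2 hk)

theorem conjFun_conjFun (hf : IsPartitionFun f) : conjFun (conjFun f) = f :=
  funext fun _ => eq_of_forall_lt_iff fun _ =>
    hf.conjFun.lt_conjFun_iff.trans hf.lt_conjFun_iff

theorem bijOn_conjFun : Set.BijOn conjFun {f | IsPartitionFun f} {f | IsPartitionFun f} :=
  Set.BijOn.mk (fun _ hf => hf.conjFun)
    (Set.LeftInvOn.injOn (f₁' := conjFun) fun _ hf => conjFun_conjFun hf)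
    fun f hf => ⟨conjFun f, hf.conjFun, conjFun_conjFun hf⟩

theorem partSum_conjFun (hf : IsPartitionFun f) : partSum (conjFun f) = partSum f := by
  obtain ⟨N, hN⟩ := hf.2
  have hrow : ∀ i, (Finset.range (f 0)).bipartiteAbove (fun i k => k < f i) i =
      Finset.range (f i) := fun i => by
    ext k
    have := hf.antitone (Nat.zero_le i)
    simp only [Finset.mem_bipartiteAbove, Finset.mem_range]
    omega
  have hcol : ∀ k, (Finset.range N).bipartiteBelow (fun i k => k < f i) k =
      Finset.range (conjFun f k) := fun k => by
    ext i
    have hNi := hN i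
    simp only [Finset.mem_bipartiteBelow, Finset.mem_range, hf.lt_conjFun_iff]
    omega
  have hdouble := Finset.sum_card_bipartiteAbove_eq_sum_card_bipartiteBelow
    (s := Finset.range N) (t := Finset.range (f 0)) (fun i k => k < f i)
  simp only [hrow, hcol, Finset.card_range] at hdouble
  rw [partSum_eq_sum_range hN, hdouble]
  exact partSum_eq_sum_range fun k hk => Nat.le_zero.1 (hf.conjFun_le_iff.2 hk)

theorem multiplicity'_conjFun_succ (hf : IsPartitionFun f) (k : ℕ) :
    multiplicity' (conjFun f) (k + 1) = f k - f (k + 1) := by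
  have hset : {i | conjFun f i = k + 1} = ↑(Finset.Ico (f (k + 1)) (f k)) := by
    ext i
    simpa using hf.conjFun_eq_succ_iff
  rw [multiplicity', hset, Set.ncard_coe_finset, Nat.card_Ico]

theorem multiplicity'_conjFun_add (hf : IsPartitionFun f) (hg : IsPartitionFun g) {k : ℕ}
    (hk : k ≠ 0) :
    multiplicity' (conjFun (f + g)) k =
      multiplicity' (conjFun f) k + multiplicity' (conjFun g) k := by
  obtain ⟨k, rfl⟩ := Nat.exists_eq_succ_of_ne_zero hk
  rw [multiplicity'_conjFun_succ (hf.add hg), multiplicity'_conjFun_succ hf,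
    multiplicity'_conjFun_succ hg, Pi.add_apply, Pi.add_apply]
  exact (tsub_add_tsub_comm (hf.antitone k.le_succ) (hg.antitone k.le_succ)).symm

theorem IsPartitionFun.ncard_setOf_eq_sum_multiplicity' (hf : IsPartitionFun f) {M : ℕ}
    (hM : f 0 < M) {p : ℕ → Prop} [DecidablePred p] (hp : ¬ p 0) :
    {i | p (f i)}.ncard = ∑ k ∈ Finset.range M with p k, multiplicity' f k := by
  have hfin := hf.finite_setOf hp
  have hmaps : ∀ i ∈ hfin.toFinset, f i ∈ (Finset.range M).filter p := fun i hi => by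
    rw [Set.Finite.mem_toFinset, Set.mem_ofPred_eq] at hi
    simpa using ⟨(hf.antitone i.zero_le).trans_lt hM, hi⟩
  rw [Set.ncard_eq_toFinset_card _ hfin, Finset.card_eq_sum_card_fiberwise hmaps]
  refine Finset.sum_congr rfl fun k hk => ?_
  rw [multiplicity', ← Set.ncard_coe_finset]
  congr 1
  ext i
  simpa using fun hi : f i = k => hi ▸ (Finset.mem_filter.1 hk).2

theorem ncard_setOf_conjFun_add (hf : IsPartitionFun f) (hg : IsPartitionFun g)
    {p : ℕ → Prop} (hp : ¬ p 0) :
    {i | p (conjFun (f + g) i)}.ncard =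
      {i | p (conjFun f i)}.ncard + {i | p (conjFun g i)}.ncard := by
  classical
  obtain ⟨M, hM⟩ := exists_gt (max (conjFun (f + g) 0) (max (conjFun f 0) (conjFun g 0)))
  simp only [max_lt_iff] at hM
  rw [(hf.add hg).conjFun.ncard_setOf_eq_sum_multiplicity' hM.1 hp,
    hf.conjFun.ncard_setOf_eq_sum_multiplicity' hM.2.1 hp,
    hg.conjFun.ncard_setOf_eq_sum_multiplicity' hM.2.2 hp, ← Finset.sum_add_distrib]
  refine Finset.sum_congr rfl fun k hk => multiplicity'_conjFun_add hf hg ?_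
  rintro rfl
  exact hp (Finset.mem_filter.1 hk).2

theorem oddParts_conjFun_add (hf : IsPartitionFun f) (hg : IsPartitionFun g) :
    oddParts (conjFun (f + g)) = oddParts (conjFun f) + oddParts (conjFun g) :=
  ncard_setOf_conjFun_add hf hg Nat.not_odd_zero

end Conjugate

section DistinctOddParts

/-- The partitions in which no odd part is repeated. -/
def distinctOddParts : Set (ℕ → ℕ) :=
  {f | IsPartitionFun f ∧ ∀ i, Odd (f i) → f (i + 1) < f i}

/-- The partitions whose conjugate has no repeated odd part: the multiplicity of `2 * i + 1` in the
conjugate of `f` is `f (2 * i) - f (2 * i + 1)`. -/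
def distinctOddColumns : Set (ℕ → ℕ) :=
  {f | IsPartitionFun f ∧ ∀ i, f (2 * i) ≤ f (2 * i + 1) + 1}

variable {f : ℕ → ℕ}

theorem conjFun_mem_distinctOddColumns (hf : f ∈ distinctOddParts) :
    conjFun f ∈ distinctOddColumns := by
  obtain ⟨hf, hodd⟩ := hf
  refine ⟨hf.conjFun, fun i => hf.conjFun_le_iff.2 ?_⟩
  set j := conjFun f (2 * i + 1)
  have hj : f j ≤ 2 * i + 1 := hf.conjFun_le_iff.1 le_rfl
  have hsucc : f (j + 1) ≤ f j := hf.antitone j.le_succ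
  rcases hj.lt_or_eq with hlt | heq
  · omega
  · have := hodd j ⟨i, heq⟩
    omega

theorem conjFun_mem_distinctOddParts (hf : f ∈ distinctOddColumns) :
    conjFun f ∈ distinctOddParts := by
  obtain ⟨hf, hcol⟩ := hf
  refine ⟨hf.conjFun, fun i ⟨k, hk⟩ => ?_⟩
  have hlow : f (2 * k + 1) ≤ i := hf.conjFun_le_iff.1 hk.le
  have hhigh : conjFun f (i + 1) ≤ 2 * k :=
    hf.conjFun_le_iff.2 ((hcol k).trans (Nat.add_le_add_right hlow 1))
  omega

theorem bijOn_conjFun_distinctOddParts :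
    Set.BijOn conjFun distinctOddParts distinctOddColumns :=
  .mk (fun _ => conjFun_mem_distinctOddColumns) (bijOn_conjFun.injOn.mono fun _ hf => hf.1)
    fun f hf => ⟨conjFun f, conjFun_mem_distinctOddParts hf, conjFun_conjFun hf.1⟩

theorem injOn_setOf_odd_of_mem_distinctOddParts (hf : f ∈ distinctOddParts) :
    Set.InjOn f {i | Odd (f i)} := by
  have lt_of_lt : ∀ i j, Odd (f i) → i < j → f j < f i := fun i j hi hij =>
    (hf.1.antitone hij).trans_lt (hf.2 i hi)
  intro i hi j hj hij
  rcases lt_trichotomy i j with h | h | h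
  · exact absurd hij (lt_of_lt i j hi h).ne'
  · exact h
  · exact absurd hij (lt_of_lt j i hj h).ne

theorem ncard_odd_mem_range (hf : f ∈ distinctOddParts) :
    {k | Odd k ∧ k ∈ Set.range f}.ncard = oddParts f := by
  rw [oddParts, ← (injOn_setOf_odd_of_mem_distinctOddParts hf).ncard_image]
  congr 1
  ext k
  constructor
  · rintro ⟨hk, i, rfl⟩
    exact ⟨i, hk, rfl⟩
  · rintro ⟨i, hi, rfl⟩
    exact ⟨hi, i, rfl⟩

theorem odd_multiplicity'_iff_mem_range (hf : f ∈ distinctOddParts) {k : ℕ} (hk : Odd k) :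
    Odd (multiplicity' f k) ↔ k ∈ Set.range f := by
  have hsub : {i | f i = k}.Subsingleton := fun i (hi : f i = k) j (hj : f j = k) =>
    injOn_setOf_odd_of_mem_distinctOddParts hf (show Odd (f i) from hi ▸ hk)
      (show Odd (f j) from hj ▸ hk) (hi.trans hj.symm)
  change Odd (multiplicity' f k) ↔ {i | f i = k}.Nonempty
  rw [multiplicity']
  rcases hsub.eq_empty_or_singleton with hempty | ⟨i, hi⟩
  · simp [hempty]
  · simp [hi]

end DistinctOddParts

section OddColumnPairs

/-- The partition whose conjugate consists of `2 * (t i - t (i + 1))` copies of `2 * i + 1` for each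
`i`; its rows come in the pattern `2 t₀, 2 t₁, 2 t₁, 2 t₂, 2 t₂, …`. Adding it to a partition
adjoins pairs of equal odd parts to the conjugate. -/
def oddColumnPairs (t : ℕ → ℕ) : ℕ → ℕ := fun j => 2 * t ((j + 1) / 2)

variable {f t : ℕ → ℕ}

theorem oddColumnPairs_two_mul (t : ℕ → ℕ) (i : ℕ) : oddColumnPairs t (2 * i) = 2 * t i := by
  rw [oddColumnPairs, show (2 * i + 1) / 2 = i by omega]

theorem oddColumnPairs_two_mul_add_one (t : ℕ → ℕ) (i : ℕ) :
    oddColumnPairs t (2 * i + 1) = 2 * t (i + 1) := by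
  rw [oddColumnPairs, show (2 * i + 1 + 1) / 2 = i + 1 by omega]

protected theorem IsPartitionFun.oddColumnPairs (ht : IsPartitionFun t) :
    IsPartitionFun (oddColumnPairs t) := by
  obtain ⟨N, hN⟩ := ht.2
  refine ⟨fun i j hij => Nat.mul_le_mul_left 2 (ht.antitone (by omega)), 2 * N, fun i hi => ?_⟩
  rw [oddColumnPairs, hN _ (by omega)]

theorem injOn_add_oddColumnPairs :
    Set.InjOn (fun a : (ℕ → ℕ) × (ℕ → ℕ) => a.2 + oddColumnPairs a.1)
      ({t | IsPartitionFun t} ×ˢ distinctOddColumns) := by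
  rintro ⟨t, f⟩ ⟨ht, hf, hcol⟩ ⟨t', f'⟩ ⟨ht', hf', hcol'⟩ h
  simp only [Set.mem_ofPred_eq] at ht ht' hf hf' hcol hcol' h
  have htt' : t = t' := ht.eq_of_sub_succ_eq ht' fun i => by
    have heven := congrFun h (2 * i)
    have hodd := congrFun h (2 * i + 1)
    simp only [Pi.add_apply, oddColumnPairs_two_mul, oddColumnPairs_two_mul_add_one] at heven hodd
    have hf_le : f (2 * i + 1) ≤ f (2 * i) := hf.antitone (Nat.le_succ _)
    have hf'_le : f' (2 * i + 1) ≤ f' (2 * i) := hf'.antitone (Nat.le_succ _)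
    have := hcol i
    have := hcol' i
    omega
  subst htt'
  rw [add_right_cancel h]

theorem exists_eq_add_oddColumnPairs (hf : IsPartitionFun f) :
    ∃ t, IsPartitionFun t ∧ ∃ g ∈ distinctOddColumns, g + oddColumnPairs t = f := by
  obtain ⟨N, hN⟩ := hf.2
  obtain ⟨t, ht, ht_rec⟩ := exists_isPartitionFun_eq_add_succ (N := N)
    (x := fun i => (f (2 * i) - f (2 * i + 1)) / 2) fun i hi => by simp [hN (2 * i) (by omega)]
  obtain ⟨g, hg, hg_rec⟩ := exists_isPartitionFun_eq_add_succ (N := N)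
    (x := fun j => if Even j then (f j - f (j + 1)) % 2 else f j - f (j + 1))
    fun j hj => by simp [hN j hj]
  have hg_even : ∀ i, g (2 * i) = (f (2 * i) - f (2 * i + 1)) % 2 + g (2 * i + 1) := fun i => by
    rw [hg_rec, if_pos (even_two_mul i)]
  have hg_odd : ∀ i, g (2 * i + 1) = f (2 * i + 1) - f (2 * (i + 1)) + g (2 * (i + 1)) :=
    fun i => by rw [hg_rec, if_neg (by simp)]; rfl
  refine ⟨t, ht, g, ⟨hg, fun i => by rw [hg_even]; omega⟩,
    (hg.add ht.oddColumnPairs).eq_of_sub_succ_eq hf fun j => ?_⟩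
  rcases j.even_or_odd' with ⟨i, rfl | rfl⟩
  · simp only [Pi.add_apply, oddColumnPairs_two_mul, oddColumnPairs_two_mul_add_one, hg_even i,
      ht_rec i]
    omega
  · rw [Pi.add_apply, Pi.add_apply, oddColumnPairs_two_mul_add_one,
      show 2 * i + 1 + 1 = 2 * (i + 1) by ring, oddColumnPairs_two_mul, hg_odd i]
    omega

theorem bijOn_add_oddColumnPairs :
    Set.BijOn (fun a : (ℕ → ℕ) × (ℕ → ℕ) => a.2 + oddColumnPairs a.1)
      ({t | IsPartitionFun t} ×ˢ distinctOddColumns) {f | IsPartitionFun f} := by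
  refine .mk (fun a ha => ha.2.1.add ha.1.oddColumnPairs) injOn_add_oddColumnPairs fun f hf => ?_
  obtain ⟨t, ht, g, hg, rfl⟩ := exists_eq_add_oddColumnPairs hf
  exact ⟨(t, g), ⟨ht, hg⟩, rfl⟩

theorem oddParts_add_oddColumnPairs (f t : ℕ → ℕ) :
    oddParts (f + oddColumnPairs t) = oddParts f := by
  simp [oddParts, oddColumnPairs, Nat.odd_add]

theorem conjFun_oddColumnPairs_mod_four_ne_two (ht : IsPartitionFun t) (i : ℕ) :
    conjFun (oddColumnPairs t) i % 4 ≠ 2 := by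
  intro hmod
  obtain ⟨k, hk⟩ : ∃ k, conjFun (oddColumnPairs t) i = 2 * k + 1 + 1 :=
    ⟨(conjFun (oddColumnPairs t) i - 2) / 2, by omega⟩
  obtain ⟨hle, hlt⟩ := ht.oddColumnPairs.conjFun_eq_succ_iff.1 hk
  rw [oddColumnPairs_two_mul_add_one] at hlt
  rw [show 2 * k + 1 + 1 = 2 * (k + 1) by ring, oddColumnPairs_two_mul] at hle
  omega

theorem even_multiplicity'_conjFun_oddColumnPairs (ht : IsPartitionFun t) {k : ℕ} (hk : k ≠ 0) :
    Even (multiplicity' (conjFun (oddColumnPairs t)) k) := by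
  obtain ⟨k, rfl⟩ := Nat.exists_eq_succ_of_ne_zero hk
  rw [multiplicity'_conjFun_succ ht.oddColumnPairs, oddColumnPairs, oddColumnPairs,
    ← Nat.mul_sub]
  exact even_two_mul _

end OddColumnPairs

section AdjoinOddPairs

/-- The partition obtained from `f` by adjoining `2 * (t i - t (i + 1))` parts equal to `2 * i + 1`
for each `i`: adding partitions row by row takes the union of the parts of their conjugates. -/
noncomputable def adjoinOddPairs (t f : ℕ → ℕ) : ℕ → ℕ :=
  conjFun (conjFun f + oddColumnPairs t)

variable {f t : ℕ → ℕ}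

theorem partSum_adjoinOddPairs (ht : IsPartitionFun t) (hf : IsPartitionFun f) :
    partSum (adjoinOddPairs t f) = partSum f + partSum (oddColumnPairs t) := by
  rw [adjoinOddPairs, partSum_conjFun (hf.conjFun.add ht.oddColumnPairs),
    partSum_add hf.conjFun ht.oddColumnPairs, partSum_conjFun hf]

theorem ncard_setOf_adjoinOddPairs (ht : IsPartitionFun t) (hf : IsPartitionFun f)
    {p : ℕ → Prop} (hp : ¬ p 0) :
    {i | p (adjoinOddPairs t f i)}.ncard =
      {i | p (f i)}.ncard + {i | p (conjFun (oddColumnPairs t) i)}.ncard := by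
  simp only [adjoinOddPairs, ncard_setOf_conjFun_add hf.conjFun ht.oddColumnPairs hp,
    conjFun_conjFun hf]

theorem oddParts_adjoinOddPairs (ht : IsPartitionFun t) (hf : IsPartitionFun f) :
    oddParts (adjoinOddPairs t f) = oddParts f + oddParts (conjFun (oddColumnPairs t)) :=
  ncard_setOf_adjoinOddPairs ht hf Nat.not_odd_zero

theorem ncard_adjoinOddPairs_mod_four_eq_two (ht : IsPartitionFun t) (hf : IsPartitionFun f) :
    {i | adjoinOddPairs t f i % 4 = 2}.ncard = {i | f i % 4 = 2}.ncard := by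
  rw [ncard_setOf_adjoinOddPairs (p := (· % 4 = 2)) ht hf (by simp)]
  simp [conjFun_oddColumnPairs_mod_four_ne_two ht]

theorem odd_multiplicity'_adjoinOddPairs_iff (ht : IsPartitionFun t) (hf : IsPartitionFun f)
    {k : ℕ} (hk : k ≠ 0) :
    Odd (multiplicity' (adjoinOddPairs t f) k) ↔ Odd (multiplicity' f k) := by
  rw [adjoinOddPairs, multiplicity'_conjFun_add hf.conjFun ht.oddColumnPairs hk,
    conjFun_conjFun hf, Nat.odd_add]
  exact iff_true_right (even_multiplicity'_conjFun_oddColumnPairs ht hk)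

theorem ncard_odd_multiplicity'_adjoinOddPairs (ht : IsPartitionFun t)
    (hf : f ∈ distinctOddParts) :
    {k | Odd k ∧ Odd (multiplicity' (adjoinOddPairs t f) k)}.ncard = oddParts f := by
  rw [← ncard_odd_mem_range hf]
  congr 1
  ext k
  exact and_congr_right fun hk =>
    (odd_multiplicity'_adjoinOddPairs_iff ht hf.1 hk.pos.ne').trans
      (odd_multiplicity'_iff_mem_range hf hk)

theorem bijOn_adjoinOddPairs :
    Set.BijOn (fun a : (ℕ → ℕ) × (ℕ → ℕ) => adjoinOddPairs a.1 a.2)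
      ({t | IsPartitionFun t} ×ˢ distinctOddParts) {f | IsPartitionFun f} :=
  bijOn_conjFun.comp <|
    bijOn_add_oddColumnPairs.comp ((Set.bijOn_id _).prodMap bijOn_conjFun_distinctOddParts)

end AdjoinOddPairs

section SplitParts

/-- The sequence obtained from `f` by replacing each part `k` with the two parts `⌈k / 2⌉, ⌊k / 2⌋`,
in this order. -/
def splitParts (f : ℕ → ℕ) : ℕ → ℕ := fun j => (f (j / 2) + (1 - j % 2)) / 2

variable {f : ℕ → ℕ}

theorem splitParts_two_mul (f : ℕ → ℕ) (i : ℕ) : splitParts f (2 * i) = (f i + 1) / 2 := by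
  rw [splitParts, show 2 * i / 2 = i by omega, show 1 - 2 * i % 2 = 1 by omega]

theorem splitParts_two_mul_add_one (f : ℕ → ℕ) (i : ℕ) :
    splitParts f (2 * i + 1) = f i / 2 := by
  rw [splitParts, show (2 * i + 1) / 2 = i by omega, show 1 - (2 * i + 1) % 2 = 0 by omega,
    add_zero]

theorem splitParts_two_mul_add_splitParts (f : ℕ → ℕ) (i : ℕ) :
    splitParts f (2 * i) + splitParts f (2 * i + 1) = f i := by
  rw [splitParts_two_mul, splitParts_two_mul_add_one]
  omega

theorem splitParts_mem_distinctOddColumns (hf : f ∈ distinctOddParts) :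
    splitParts f ∈ distinctOddColumns := by
  obtain ⟨hf, hodd⟩ := hf
  obtain ⟨N, hN⟩ := hf.2
  refine ⟨.of_succ_le (N := 2 * N) (fun j => ?_) fun j hj => ?_, fun i => ?_⟩
  · rcases j.even_or_odd' with ⟨i, rfl | rfl⟩
    · rw [splitParts_two_mul, splitParts_two_mul_add_one]
      omega
    · rw [splitParts_two_mul_add_one, show 2 * i + 1 + 1 = 2 * (i + 1) by ring,
        splitParts_two_mul]
      have hsucc : f (i + 1) ≤ f i := hf.antitone i.le_succ
      rcases (f i).even_or_odd with heven | hi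
      · rw [Nat.even_iff] at heven
        omega
      · have := hodd i hi
        omega
  · rw [splitParts, hN _ (by omega)]
    omega
  · rw [splitParts_two_mul, splitParts_two_mul_add_one]
    omega

theorem exists_splitParts_eq (hf : f ∈ distinctOddColumns) :
    ∃ g ∈ distinctOddParts, splitParts g = f := by
  obtain ⟨hf, hcol⟩ := hf
  obtain ⟨N, hN⟩ := hf.2
  have hodd_le : ∀ i, f (2 * i + 1) ≤ f (2 * i) := fun i => hf.antitone (Nat.le_succ _)
  have heven_le : ∀ i, f (2 * (i + 1)) ≤ f (2 * i + 1) := fun i => hf.antitone (by omega)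
  refine ⟨fun i => f (2 * i) + f (2 * i + 1), ⟨.of_succ_le (N := N) (fun i => ?_) fun i hi => ?_,
    fun i hi => ?_⟩, funext fun j => ?_⟩
  · exact add_le_add (hf.antitone (by omega)) (hf.antitone (by omega))
  · rw [hN _ (by omega), hN _ (by omega)]
  · rw [Nat.odd_iff] at hi
    dsimp only at hi ⊢
    have := hodd_le i
    have := heven_le i
    have := hodd_le (i + 1)
    omega
  · rcases j.even_or_odd' with ⟨i, rfl | rfl⟩
    all_goals
      have := hodd_le i
      have := hcol i
      simp only [splitParts_two_mul, splitParts_two_mul_add_one]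
      omega

theorem bijOn_splitParts : Set.BijOn splitParts distinctOddParts distinctOddColumns :=
  .mk (fun _ => splitParts_mem_distinctOddColumns)
    (fun f _ g _ hfg => funext fun i => by
      rw [← splitParts_two_mul_add_splitParts f, hfg, splitParts_two_mul_add_splitParts])
    fun _ => exists_splitParts_eq

theorem tsum_splitParts (hf : IsPartitionFun f) {φ : ℕ → ℕ} (hφ : φ 0 = 0) :
    ∑' j, φ (splitParts f j) = ∑' i, (φ ((f i + 1) / 2) + φ (f i / 2)) := by
  have heven := hf.summable_comp (φ := fun k => φ ((k + 1) / 2)) (by simpa using hφ)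
  have hodd := hf.summable_comp (φ := fun k => φ (k / 2)) (by simpa using hφ)
  rw [heven.tsum_add hodd, ← tsum_even_add_odd]
  · simp only [splitParts_two_mul, splitParts_two_mul_add_one]
  · simpa only [splitParts_two_mul] using heven
  · simpa only [splitParts_two_mul_add_one] using hodd

theorem partSum_splitParts (hf : IsPartitionFun f) : partSum (splitParts f) = partSum f := by
  rw [partSum, partSum, tsum_splitParts hf (φ := fun k => k) rfl]
  exact tsum_congr fun i => by omega

theorem oddParts_splitParts (hf : IsPartitionFun f) :
    oddParts (splitParts f) = 2 * {i | f i % 4 = 2}.ncard + oddParts f := by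
  have hsplit_fin : {j | Odd (splitParts f j)}.Finite := by
    obtain ⟨N, hN⟩ := hf.2
    refine (Set.finite_Iio (2 * N)).subset fun j ⟨m, hm⟩ => Set.mem_Iio.2 ?_
    have hzero := hN (j / 2)
    rw [splitParts] at hm
    omega
  have hmod_fin := hf.finite_setOf (p := (· % 4 = 2)) (by simp)
  have hmod := hf.summable_comp (φ := fun k => if k % 4 = 2 then 1 else 0) rfl
  have hodd_fin := hf.finite_setOf Nat.not_odd_zero
  have hodd := hf.summable_comp (φ := fun k => if Odd k then 1 else 0) rfl
  rw [oddParts, oddParts, ncard_setOf_eq_tsum hsplit_fin, ncard_setOf_eq_tsum hmod_fin,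
    ncard_setOf_eq_tsum hodd_fin, tsum_splitParts hf (φ := fun k => if Odd k then 1 else 0) rfl,
    ← hmod.tsum_mul_left, ← (hmod.mul_left 2).tsum_add hodd]
  refine tsum_congr fun i => ?_
  simp only [Nat.odd_iff]
  split_ifs <;> omega

theorem oddParts_conjFun_splitParts (hf : f ∈ distinctOddParts) :
    oddParts (conjFun (splitParts f)) = oddParts f := by
  have hsplit := (splitParts_mem_distinctOddColumns hf).1
  have eq_iff : ∀ i j, conjFun (splitParts f) i = 2 * j + 1 ↔ f j = 2 * i + 1 := fun i j => by
    rw [hsplit.conjFun_eq_succ_iff, splitParts_two_mul, splitParts_two_mul_add_one]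
    omega
  rw [← ncard_odd_mem_range hf, oddParts,
    ← Set.ncard_image_of_injective (f := fun i => 2 * i + 1) _ fun i j h => by simpa using h]
  congr 1
  ext k
  constructor
  · rintro ⟨i, ⟨j, hj⟩, rfl⟩
    exact ⟨odd_two_mul_add_one i, j, (eq_iff i j).1 hj⟩
  · rintro ⟨⟨i, rfl⟩, j, hj⟩
    exact ⟨i, ⟨j, (eq_iff i j).2 hj⟩, rfl⟩

theorem bijOn_splitParts_add_oddColumnPairs :
    Set.BijOn (fun a : (ℕ → ℕ) × (ℕ → ℕ) => splitParts a.2 + oddColumnPairs a.1)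
      ({t | IsPartitionFun t} ×ˢ distinctOddParts) {f | IsPartitionFun f} :=
  bijOn_add_oddColumnPairs.comp ((Set.bijOn_id _).prodMap bijOn_splitParts)

end SplitParts

/-- For all nonnegative integers `n, r, s`, the number of partitions `π` of `n` such that `π`
has exactly `r` odd parts and the conjugate `π′` has exactly `s` odd parts equals the number
of partitions of `n` having exactly `s` odd parts and such that twice the number of parts
congruent to 2 mod 4 plus the number of distinct odd integers occurring with odd
multiplicity equals `r`. -/
theorem stanley_partition_identity (n r s : ℕ) :
    {f : ℕ → ℕ | IsPartitionFun f ∧ partSum f = n ∧ oddParts f = r ∧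
        oddParts (conjFun f) = s}.ncard =
    {f : ℕ → ℕ | IsPartitionFun f ∧ partSum f = n ∧ oddParts f = s ∧
        2 * {i : ℕ | f i % 4 = 2}.ncard
          + {k : ℕ | Odd k ∧ Odd (multiplicity' f k)}.ncard = r}.ncard := by
  refine ncard_sep_eq_of_bijOn bijOn_splitParts_add_oddColumnPairs bijOn_adjoinOddPairs ?_
  rintro ⟨t, f⟩ ⟨ht, hf⟩
  have hsplit : IsPartitionFun (splitParts f) := (splitParts_mem_distinctOddColumns hf).1
  have hpairs : IsPartitionFun (oddColumnPairs t) := IsPartitionFun.oddColumnPairs ht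
  rw [partSum_add hsplit hpairs, partSum_splitParts hf.1, oddParts_add_oddColumnPairs,
    oddParts_splitParts hf.1, oddParts_conjFun_add hsplit hpairs, oddParts_conjFun_splitParts hf,
    partSum_adjoinOddPairs ht hf.1, oddParts_adjoinOddPairs ht hf.1,
    ncard_adjoinOddPairs_mod_four_eq_two ht hf.1, ncard_odd_multiplicity'_adjoinOddPairs ht hf]
  exact and_congr_right fun _ => and_comm
end

section
/- As an identity of formal power series in three variables z, y, q (over the integers), the sum over all n, r, s ≥ 0 of S(r,s;n)·zʳyˢqⁿ equals the infinite product over j ≥ 1 of (1 + y·z·q^{2j−1}) / ((1 − q^{4j})(1 − z²q^{4j−2})(1 − y²q^{4j−2})), where S(r,s;n) is the number of partitions π of n with exactly r odd parts whose conjugate π′ has exactly s odd parts. -/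
/-- `S r s n` is the number of partitions `π` of `n` with exactly `r` odd parts whose
conjugate `π′` has exactly `s` odd parts. -/
noncomputable def S (r s n : ℕ) : ℕ :=
  {f : ℕ → ℕ | IsPartitionFun f ∧ partSum f = n ∧ oddParts f = r ∧
      oddParts (conjFun f) = s}.ncard

/-- Formal power series in the three variables `z`, `y`, `q` over `ℤ`. -/
abbrev PS3 := MvPowerSeries (Fin 3) ℤ

/-- The product (coefficientwise) topology on formal power series in three variables. -/
noncomputable instance : TopologicalSpace PS3 :=
  @Pi.topologicalSpace ((Fin 3) →₀ ℕ) (fun _ => ℤ) (fun _ => inferInstance)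

/-- The variable `z`. -/
noncomputable def z : PS3 := MvPowerSeries.X 0
/-- The variable `y`. -/
noncomputable def y : PS3 := MvPowerSeries.X 1
/-- The variable `q`. -/
noncomputable def q : PS3 := MvPowerSeries.X 2

/-- `∑_{n,r,s ≥ 0} S(r,s;n) zʳ yˢ qⁿ`, i.e. the formal power series whose coefficient of
`zʳ yˢ qⁿ` is `S(r,s;n)`. -/
noncomputable def lhsSeries : PS3 :=
  fun d : (Fin 3) →₀ ℕ => (S (d 0) (d 1) (d 2) : ℤ)

/-- The `j`-th factor (for `j ≥ 1`, here indexed by `j - 1 : ℕ`) of the infinite product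
`(1 + yzq^{2j−1}) / ((1 − q^{4j})(1 − z²q^{4j−2})(1 − y²q^{4j−2}))`; the inverse of the
denominator is taken via `MvPowerSeries.invOfUnit` at the unit `1` (its constant term). -/
noncomputable def factor (j : ℕ) : PS3 :=
  (1 + y * z * q ^ (2 * (j + 1) - 1)) *
    MvPowerSeries.invOfUnit
      ((1 - q ^ (4 * (j + 1))) * (1 - z ^ 2 * q ^ (4 * (j + 1) - 2)) *
        (1 - y ^ 2 * q ^ (4 * (j + 1) - 2))) 1

/-!
Let `U N` be the generating function of the partitions with parts at most `N`, and `V N` the same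
series with the exponent of `y` complemented in `N`. Prefixing a part `N` to a partition with parts
at most `N` changes the parity of each of the first `N` columns, so it interchanges the two
statistics; hence `U` and `V` satisfy coupled first-order recurrences. Clearing denominators in the
even-indexed terms and eliminating `V` leaves a three-term recurrence for
`g n = ∏_{j < n} (1 - z² q^{4j+2}) U (2n)`, which says that `G(x) = ∑ g n xⁿ` satisfies

  `(1 - x) (1 - y² q² x) G(x) = (1 + y z q x) (1 + y z q³ x) G(q⁴ x)`.

Multiplying by `1 - q⁴ x` turns this into an equation for `p(x) = (1 - x) G(x)`, whose value at
`x = 1` is `lim g n = ∏ (1 - z² q^{4j+2}) · lim U`. Evaluating it at `1, q⁴, q⁸, …` telescopes to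
the product formula.
-/

open Filter Topology

section CountSeries

variable {ι κ σ : Type*}

/-- The generating function of the elements of `A`, each `a` contributing the monomial with
exponent `w a`. Its coefficients count the fibres of `w`; an infinite fibre is counted as `0`. -/
noncomputable def countSeries (A : Set ι) (w : ι → σ →₀ ℕ) : MvPowerSeries σ ℤ :=
  fun d => ({a ∈ A | w a = d}.ncard : ℤ)

theorem coeff_countSeries (A : Set ι) (w : ι → σ →₀ ℕ) (d : σ →₀ ℕ) :
    MvPowerSeries.coeff d (countSeries A w) = ({a ∈ A | w a = d}.ncard : ℤ) :=
  rfl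

theorem countSeries_singleton (a : ι) (w : ι → σ →₀ ℕ) :
    countSeries {a} w = MvPowerSeries.monomial (w a) 1 := by
  classical
  ext d
  rw [coeff_countSeries, MvPowerSeries.coeff_monomial]
  split_ifs with hd
  · have : {b ∈ ({a} : Set ι) | w b = d} = {a} := by ext; simp +contextual [hd]
    rw [this, Set.ncard_singleton, Nat.cast_one]
  · have : {b ∈ ({a} : Set ι) | w b = d} = ∅ := by
      ext b
      simpa using fun hb => hb ▸ Ne.symm hd
    rw [this, Set.ncard_empty, Nat.cast_zero]

theorem countSeries_union {A B : Set ι} {w : ι → σ →₀ ℕ} (hAB : Disjoint A B)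
    (hA : ∀ d, {a ∈ A | w a = d}.Finite) (hB : ∀ d, {b ∈ B | w b = d}.Finite) :
    countSeries (A ∪ B) w = countSeries A w + countSeries B w := by
  ext d
  have hsep : {a ∈ A ∪ B | w a = d} = {a ∈ A | w a = d} ∪ {b ∈ B | w b = d} := by
    ext; simp [or_and_right]
  have hdisj : Disjoint {a ∈ A | w a = d} {b ∈ B | w b = d} :=
    hAB.mono (Set.sep_subset _ _) (Set.sep_subset _ _)
  simp only [map_add, coeff_countSeries, hsep, Set.ncard_union_eq hdisj (hA d) (hB d),
    Nat.cast_add]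

theorem countSeries_image {g : κ → ι} (hg : g.Injective) (A : Set κ) (w : ι → σ →₀ ℕ) :
    countSeries (g '' A) w = countSeries A (fun b => w (g b)) := by
  ext d
  have hsep : {a ∈ g '' A | w a = d} = g '' {b ∈ A | w (g b) = d} := by
    ext; aesop
  simp only [coeff_countSeries, hsep, Set.ncard_image_of_injective _ hg]

theorem countSeries_eq_monomial_mul {A : Set ι} {w w' : ι → σ →₀ ℕ} (m : σ →₀ ℕ)
    (h : ∀ a ∈ A, w a = m + w' a) :
    countSeries A w = MvPowerSeries.monomial m 1 * countSeries A w' := by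
  classical
  ext d
  rw [MvPowerSeries.coeff_monomial_mul, one_mul, coeff_countSeries, coeff_countSeries]
  split_ifs with hmd
  · congr 2
    ext a
    refine and_congr_right fun ha => ?_
    rw [h a ha, eq_tsub_iff_add_eq_of_le hmd, add_comm]
  · have : {a ∈ A | w a = d} = ∅ :=
      Set.sep_eq_empty_iff_mem_false.2 fun a ha hd => hmd (hd ▸ h a ha ▸ le_self_add)
    simp [this]

end CountSeries

section Partitions

namespace IsPartitionFun

variable {f : ℕ → ℕ}

theorem summable (hf : IsPartitionFun f) : Summable f := by
  obtain ⟨-, N, hN⟩ := hf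
  exact summable_of_ne_finset_zero (s := Finset.range N) fun i hi => hN i (by simpa using hi)

theorem finite_setOf_s1 (hf : IsPartitionFun f) {P : ℕ → Prop} (hP : ¬ P 0) :
    {i | P (f i)}.Finite := by
  obtain ⟨-, N, hN⟩ := hf
  refine (Set.finite_lt_nat N).subset fun i hi => ?_
  by_contra hNi
  exact hP (hN i (not_lt.1 hNi) ▸ hi)

theorem le_partSum (hf : IsPartitionFun f) (i : ℕ) : f i ≤ partSum f :=
  hf.summable.le_tsum i fun _ _ => Nat.zero_le _

theorem eq_zero_of_partSum_le (hf : IsPartitionFun f) {i : ℕ} (hi : partSum f ≤ i) :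
    f i = 0 := by
  by_contra hpos
  have hparts : ∀ j ∈ Finset.range (i + 1), 1 ≤ f j := fun j hj =>
    (Nat.one_le_iff_ne_zero.2 hpos).trans (hf.1 j i (Finset.mem_range_succ_iff.1 hj))
  have hlarge : i + 1 ≤ partSum f := calc
    i + 1 ≤ ∑ j ∈ Finset.range (i + 1), f j := by
      simpa using Finset.card_nsmul_le_sum _ _ _ hparts
    _ ≤ partSum f := hf.summable.sum_le_tsum _ fun _ _ => Nat.zero_le _
  omega

end IsPartitionFun

theorem finite_setOf_partSum_eq (n : ℕ) : {f | IsPartitionFun f ∧ partSum f = n}.Finite := by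
  have hbox : {g : Fin n → ℕ | ∀ i, g i ∈ Set.Iic n}.Finite :=
    Set.Finite.pi' fun _ => Set.finite_Iic n
  refine Set.Finite.of_injOn (f := fun f (i : Fin n) => f i) ?_ ?_ hbox
  · rintro f ⟨hf, rfl⟩ i
    exact hf.le_partSum i
  · rintro f ⟨hf, hfn⟩ g ⟨hg, hgn⟩ hfg
    funext i
    by_cases hi : i < n
    · exact congrFun hfg ⟨i, hi⟩
    · rw [hf.eq_zero_of_partSum_le (by omega), hg.eq_zero_of_partSum_le (by omega)]

/-- The sequence `g` with a new first term `N` put in front. -/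
def consPart (N : ℕ) (g : ℕ → ℕ) : ℕ → ℕ
  | 0 => N
  | i + 1 => g i

theorem consPart_injective (N : ℕ) : (consPart N).Injective :=
  fun _ _ h => funext fun i => congrFun h (i + 1)

theorem consPart_zero_succ (f : ℕ → ℕ) : consPart (f 0) (fun i => f (i + 1)) = f := by
  funext i
  cases i <;> rfl

theorem isPartitionFun_consPart_iff {N : ℕ} {g : ℕ → ℕ} :
    IsPartitionFun (consPart N g) ↔ IsPartitionFun g ∧ g 0 ≤ N := by
  constructor
  · rintro ⟨hanti, K, hK⟩
    exact ⟨⟨fun i j hij => hanti (i + 1) (j + 1) (by omega), K, fun i hi => hK (i + 1) (by omega)⟩,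
      hanti 0 1 zero_le_one⟩
  · rintro ⟨⟨hanti, K, hK⟩, hN⟩
    refine ⟨fun i j hij => ?_, K + 1, fun i hi => ?_⟩
    · match i, j with
      | 0, 0 => exact le_rfl
      | 0, j + 1 => exact (hanti 0 j (Nat.zero_le j)).trans hN
      | i + 1, j + 1 => exact hanti i j (by omega)
    · match i with
      | i + 1 => exact hK i (by omega)

section Cons

variable {N : ℕ} {g : ℕ → ℕ}

theorem partSum_consPart (hg : IsPartitionFun g) : partSum (consPart N g) = N + partSum g :=
  tsum_eq_zero_add' hg.summable

theorem ncard_setOf_consPart (hg : IsPartitionFun g) {P : ℕ → Prop} [DecidablePred P]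
    (hP : ¬ P 0) :
    {i | P (consPart N g i)}.ncard = (if P N then 1 else 0) + {i | P (g i)}.ncard := by
  have hsplit : {i | P (consPart N g i)} =
      {i | i = 0 ∧ P N} ∪ Nat.succ '' {i | P (g i)} := by
    ext (_ | i) <;> simp [consPart]
  have hfirst : {i | i = 0 ∧ P N}.ncard = if P N then 1 else 0 := by
    split_ifs with h <;> simp [h]
  rw [hsplit, Set.ncard_union_eq _ ((Set.finite_singleton 0).subset fun _ hi => hi.1)
    ((hg.finite_setOf_s1 hP).image _), hfirst, Set.ncard_image_of_injective _ Nat.succ_injective]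
  simp +contextual [Set.disjoint_left]

theorem oddParts_consPart (hg : IsPartitionFun g) :
    oddParts (consPart N g) = N % 2 + oddParts g := by
  have hparity : (if Odd N then 1 else 0) = N % 2 := by split_ifs with h <;> grind
  exact hparity ▸ ncard_setOf_consPart hg (by decide)

theorem conjFun_consPart (hg : IsPartitionFun g) (i : ℕ) :
    conjFun (consPart N g) i = (if i < N then 1 else 0) + conjFun g i :=
  ncard_setOf_consPart hg (P := (i < ·)) (Nat.not_lt_zero i)

theorem conjFun_eq_zero (hg : IsPartitionFun g) {i : ℕ} (hi : g 0 ≤ i) : conjFun g i = 0 := by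
  have : {j | i + 1 ≤ g j} = ∅ :=
    Set.eq_empty_of_forall_notMem fun j hj => by
      have := hg.1 0 j (Nat.zero_le j)
      grind
  rw [conjFun, this, Set.ncard_empty]

-- The new part lengthens each of the first `N` columns by one and all others vanish, so every
-- column `i < N` is odd for exactly one of the two diagrams.
theorem oddParts_conjFun_consPart_add (hg : IsPartitionFun g) (hN : g 0 ≤ N) :
    oddParts (conjFun (consPart N g)) + oddParts (conjFun g) = N := by
  have hodd : ∀ i, Odd (conjFun (consPart N g) i) ↔ i < N ∧ ¬ Odd (conjFun g i) := by
    intro i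
    by_cases hi : i < N
    · simp [conjFun_consPart hg, hi, add_comm 1, Nat.odd_add_one]
    · simp [conjFun_consPart hg, hi, conjFun_eq_zero hg (hN.trans (not_lt.1 hi))]
  have hsub : {i | Odd (conjFun g i)} ⊆ Set.Iio N := fun i hi => by
    by_contra hNi
    simp [conjFun_eq_zero hg (hN.trans (not_lt.1 hNi))] at hi
  have hdiff : {i | Odd (conjFun (consPart N g) i)} = Set.Iio N \ {i | Odd (conjFun g i)} := by
    ext i
    exact hodd i
  rw [oddParts, oddParts, hdiff, Set.ncard_sdiff_add_ncard_of_subset hsub (Set.finite_Iio N),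
    Set.ncard_Iio_nat]

end Cons

theorem oddParts_conjFun_le {f : ℕ → ℕ} (hf : IsPartitionFun f) :
    oddParts (conjFun f) ≤ f 0 := by
  have h := oddParts_conjFun_consPart_add hf le_rfl
  omega

/-- The partitions all of whose parts are at most `N`. -/
def boundedPartitions (N : ℕ) : Set (ℕ → ℕ) :=
  {f | IsPartitionFun f ∧ f 0 ≤ N}

theorem boundedPartitions_zero : boundedPartitions 0 = {0} := by
  ext f
  constructor
  · rintro ⟨hf, h0⟩
    funext i
    exact Nat.le_zero.1 ((hf.1 0 i (Nat.zero_le i)).trans h0)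
  · rintro rfl
    exact ⟨⟨fun _ _ _ => le_rfl, 0, fun _ _ => rfl⟩, le_rfl⟩

theorem boundedPartitions_succ (N : ℕ) :
    boundedPartitions (N + 1) =
      boundedPartitions N ∪ consPart (N + 1) '' boundedPartitions (N + 1) := by
  ext f
  constructor
  · rintro ⟨hf, hfN⟩
    rcases Nat.le_succ_iff.1 hfN with hle | heq
    · exact Or.inl ⟨hf, hle⟩
    · have hcons : consPart (N + 1) (fun i => f (i + 1)) = f := by
        rw [← Nat.succ_eq_add_one, ← heq, consPart_zero_succ]
      exact Or.inr ⟨_, isPartitionFun_consPart_iff.1 (hcons ▸ hf), hcons⟩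
  · rintro (⟨hf, hfN⟩ | ⟨g, hg, rfl⟩)
    · exact ⟨hf, hfN.trans N.le_succ⟩
    · exact ⟨isPartitionFun_consPart_iff.2 hg, le_rfl⟩

theorem disjoint_boundedPartitions_image_consPart (N : ℕ) (A : Set (ℕ → ℕ)) :
    Disjoint (boundedPartitions N) (consPart (N + 1) '' A) := by
  rw [Set.disjoint_left]
  rintro _ ⟨-, hle⟩ ⟨g, -, rfl⟩
  exact Nat.not_succ_le_self N hle

end Partitions

section GeneratingFunctions

/-- The exponent of the monomial `zʳ yˢ qⁿ`. -/
noncomputable def zyqExponent (r s n : ℕ) : Fin 3 →₀ ℕ :=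
  Finsupp.equivFunOnFinite.symm ![r, s, n]

theorem zyqExponent_eq_iff {r s n : ℕ} {d : Fin 3 →₀ ℕ} :
    zyqExponent r s n = d ↔ r = d 0 ∧ s = d 1 ∧ n = d 2 := by
  simp [zyqExponent, Finsupp.ext_iff, Fin.forall_fin_succ]

theorem zyqExponent_add (r s n r' s' n' : ℕ) :
    zyqExponent r s n + zyqExponent r' s' n' = zyqExponent (r + r') (s + s') (n + n') := by
  ext i
  fin_cases i <;> rfl

theorem monomial_zyqExponent (r s n : ℕ) :
    MvPowerSeries.monomial (zyqExponent r s n) (1 : ℤ) = z ^ r * y ^ s * q ^ n := by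
  have : zyqExponent r s n = Finsupp.single 0 r + Finsupp.single 1 s + Finsupp.single 2 n := by
    rw [zyqExponent_eq_iff]
    simp
  simp only [z, y, q, MvPowerSeries.X_pow_eq, MvPowerSeries.monomial_mul_monomial, one_mul, this]

/-- The exponent with which a partition enters `lhsSeries`. -/
noncomputable def partitionWeight (f : ℕ → ℕ) : Fin 3 →₀ ℕ :=
  zyqExponent (oddParts f) (oddParts (conjFun f)) (partSum f)

/-- The weight of a partition in a frame of width `N`: the exponent of `y` counts the columns
`i < N` of even length instead of those of odd length. -/
noncomputable def coPartitionWeight (N : ℕ) (f : ℕ → ℕ) : Fin 3 →₀ ℕ :=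
  zyqExponent (oddParts f) (N - oddParts (conjFun f)) (partSum f)

/-- The generating function of the partitions with parts at most `N`. -/
noncomputable def boundedSeries (N : ℕ) : PS3 :=
  countSeries (boundedPartitions N) partitionWeight

/-- The companion of `boundedSeries N` with the exponent of `y` complemented in `N`. -/
noncomputable def coBoundedSeries (N : ℕ) : PS3 :=
  countSeries (boundedPartitions N) (coPartitionWeight N)

theorem partitionWeight_consPart {N : ℕ} {g : ℕ → ℕ} (hg : g ∈ boundedPartitions N) :
    partitionWeight (consPart N g) = zyqExponent (N % 2) 0 N + coPartitionWeight N g := by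
  have h := oddParts_conjFun_consPart_add hg.1 hg.2
  rw [coPartitionWeight, zyqExponent_add, zero_add, partitionWeight, oddParts_consPart hg.1,
    partSum_consPart hg.1, Nat.eq_sub_of_add_eq h]

theorem coPartitionWeight_consPart {N : ℕ} {g : ℕ → ℕ} (hg : g ∈ boundedPartitions N) :
    coPartitionWeight N (consPart N g) = zyqExponent (N % 2) 0 N + partitionWeight g := by
  have h := oddParts_conjFun_consPart_add hg.1 hg.2
  rw [partitionWeight, zyqExponent_add, zero_add, coPartitionWeight, oddParts_consPart hg.1,
    partSum_consPart hg.1, ← Nat.eq_sub_of_add_eq' h]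

theorem coPartitionWeight_succ {N : ℕ} {f : ℕ → ℕ} (hf : f ∈ boundedPartitions N) :
    coPartitionWeight (N + 1) f = zyqExponent 0 1 0 + coPartitionWeight N f := by
  have h : oddParts (conjFun f) ≤ N := (oddParts_conjFun_le hf.1).trans hf.2
  rw [coPartitionWeight, coPartitionWeight, zyqExponent_add, zero_add, zero_add, add_comm 1,
    Nat.succ_sub h]

theorem finite_setOf_weight_eq {A : Set (ℕ → ℕ)} (hA : ∀ f ∈ A, IsPartitionFun f)
    {w : (ℕ → ℕ) → Fin 3 →₀ ℕ} (hw : ∀ f, w f 2 = partSum f) (d : Fin 3 →₀ ℕ) :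
    {f ∈ A | w f = d}.Finite :=
  (finite_setOf_partSum_eq (d 2)).subset fun f hf => ⟨hA f hf.1, hf.2 ▸ (hw f).symm⟩

theorem countSeries_boundedPartitions_succ (N : ℕ) {w : (ℕ → ℕ) → Fin 3 →₀ ℕ}
    (hw : ∀ f, w f 2 = partSum f) :
    countSeries (boundedPartitions (N + 1)) w =
      countSeries (boundedPartitions N) w +
        countSeries (boundedPartitions (N + 1)) (fun g => w (consPart (N + 1) g)) := by
  have hcons : ∀ f ∈ consPart (N + 1) '' boundedPartitions (N + 1), IsPartitionFun f := by
    rintro _ ⟨g, hg, rfl⟩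
    exact isPartitionFun_consPart_iff.2 hg
  rw [← countSeries_image (consPart_injective _), ← countSeries_union
    (disjoint_boundedPartitions_image_consPart _ _)
    (finite_setOf_weight_eq (fun f hf => hf.1) hw) (finite_setOf_weight_eq hcons hw),
    ← boundedPartitions_succ]

theorem boundedSeries_succ (N : ℕ) :
    boundedSeries (N + 1) =
      boundedSeries N + z ^ ((N + 1) % 2) * q ^ (N + 1) * coBoundedSeries (N + 1) := by
  have hlarge : countSeries (boundedPartitions (N + 1))
      (fun g => partitionWeight (consPart (N + 1) g)) =
      z ^ ((N + 1) % 2) * q ^ (N + 1) * coBoundedSeries (N + 1) := by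
    rw [countSeries_eq_monomial_mul _ fun g hg => partitionWeight_consPart hg,
      monomial_zyqExponent, pow_zero, mul_one, coBoundedSeries]
  rw [← hlarge]
  exact countSeries_boundedPartitions_succ N fun _ => rfl

theorem coBoundedSeries_succ (N : ℕ) :
    coBoundedSeries (N + 1) =
      y * coBoundedSeries N + z ^ ((N + 1) % 2) * q ^ (N + 1) * boundedSeries (N + 1) := by
  have hsmall : countSeries (boundedPartitions N) (coPartitionWeight (N + 1)) =
      y * coBoundedSeries N := by
    rw [countSeries_eq_monomial_mul _ fun f hf => coPartitionWeight_succ hf,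
      monomial_zyqExponent, coBoundedSeries]
    ring
  have hlarge : countSeries (boundedPartitions (N + 1))
      (fun g => coPartitionWeight (N + 1) (consPart (N + 1) g)) =
        z ^ ((N + 1) % 2) * q ^ (N + 1) * boundedSeries (N + 1) := by
    rw [countSeries_eq_monomial_mul _ fun g hg => coPartitionWeight_consPart hg,
      monomial_zyqExponent, pow_zero, mul_one, boundedSeries]
  rw [← hsmall, ← hlarge]
  exact countSeries_boundedPartitions_succ N fun _ => rfl

theorem partitionWeight_zero : partitionWeight 0 = 0 := by
  simp [partitionWeight, zyqExponent_eq_iff, oddParts, conjFun, partSum]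

theorem boundedSeries_zero : boundedSeries 0 = 1 := by
  rw [boundedSeries, boundedPartitions_zero, countSeries_singleton, partitionWeight_zero]
  rfl

theorem coBoundedSeries_zero : coBoundedSeries 0 = 1 := by
  have : coPartitionWeight 0 0 = 0 := by
    simp [coPartitionWeight, zyqExponent_eq_iff, oddParts, partSum]
  rw [coBoundedSeries, boundedPartitions_zero, countSeries_singleton, this]
  rfl

theorem lhsSeries_eq_countSeries :
    lhsSeries = countSeries {f | IsPartitionFun f} partitionWeight := by
  ext d
  change ((S (d 0) (d 1) (d 2) : ℕ) : ℤ) = _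
  rw [coeff_countSeries, S]
  congr 2
  ext f
  simp only [partitionWeight, zyqExponent_eq_iff, Set.mem_ofPred_eq]
  tauto

theorem coeff_boundedSeries_of_le {N : ℕ} {d : Fin 3 →₀ ℕ} (hd : d 2 ≤ N) :
    MvPowerSeries.coeff d (boundedSeries N) = MvPowerSeries.coeff d lhsSeries := by
  rw [lhsSeries_eq_countSeries, boundedSeries, coeff_countSeries, coeff_countSeries]
  congr 2
  ext f
  simp only [boundedPartitions, partitionWeight, zyqExponent_eq_iff, Set.mem_ofPred_eq]
  refine ⟨fun h => ⟨h.1.1, h.2⟩, fun h => ⟨⟨h.1, ?_⟩, h.2⟩⟩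
  exact (h.1.le_partSum 0).trans (h.2.2.2.trans_le hd)

theorem tendsto_boundedSeries : Tendsto boundedSeries atTop (𝓝 lhsSeries) :=
  tendsto_pi_nhds.2 fun d => tendsto_const_nhds.congr' <| by
    filter_upwards [eventually_ge_atTop (d 2)] with N hN
    exact (coeff_boundedSeries_of_le hN).symm

end GeneratingFunctions

section Recurrences

variable {R : Type*} [CommRing R]

theorem one_sub_sq_mul_of_coupled {u u' v v' w y : R} (hu : u' = u + w * v')
    (hv : v' = y * v + w * u') :
    (1 - w ^ 2) * u' = u + w * y * v ∧ (1 - w ^ 2) * v' = y * v + w * u := by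
  constructor
  · linear_combination hu + w * hv
  · linear_combination hv + w * hu

/-- The even-indexed terms of `W` with the denominators `1 - z² q^{4j+2}`, which enter when an
odd part `2j + 1` is repeated, cleared. -/
def evenCleared (q z : R) (W : ℕ → R) (n : ℕ) : R :=
  (∏ j ∈ Finset.range n, (1 - z ^ 2 * q ^ (4 * j + 2))) * W (2 * n)

theorem evenCleared_zero (q z : R) (W : ℕ → R) : evenCleared q z W 0 = W 0 := by
  simp [evenCleared]

variable {q y z : R} {U V : ℕ → R}

theorem evenCleared_two_step
    (hU : ∀ N, U (N + 1) = U N + z ^ ((N + 1) % 2) * q ^ (N + 1) * V (N + 1))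
    (hV : ∀ N, V (N + 1) = y * V N + z ^ ((N + 1) % 2) * q ^ (N + 1) * U (N + 1)) (k : ℕ) :
    (1 - q ^ (4 * (k + 1))) * evenCleared q z U (k + 1) =
        (1 + y * z * q ^ (4 * k + 3)) * evenCleared q z U k +
          q ^ (2 * k) * (y * z * q + y ^ 2 * q ^ 2) * evenCleared q z V k ∧
      (1 - q ^ (4 * (k + 1))) * evenCleared q z V (k + 1) =
        (y ^ 2 + y * z * q ^ (4 * k + 3)) * evenCleared q z V k +
          q ^ (2 * k) * (y * z * q + q ^ 2) * evenCleared q z U k := by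
  have hoddPart := one_sub_sq_mul_of_coupled (hU (2 * k)) (hV (2 * k))
  have hevenPart := one_sub_sq_mul_of_coupled (hU (2 * k + 1)) (hV (2 * k + 1))
  rw [show (2 * k + 1) % 2 = 1 by omega, pow_one] at hoddPart
  rw [show (2 * k + 1 + 1) % 2 = 0 by omega, pow_zero, one_mul] at hevenPart
  obtain ⟨hU₁, hV₁⟩ := hoddPart
  obtain ⟨hU₂, hV₂⟩ := hevenPart
  simp only [evenCleared, Finset.prod_range_succ, show 2 * (k + 1) = 2 * k + 1 + 1 by ring]
  set D := ∏ j ∈ Finset.range k, (1 - z ^ 2 * q ^ (4 * j + 2))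
  constructor
  · linear_combination
      D * ((1 - z ^ 2 * q ^ (4 * k + 2)) * hU₂ + hU₁ + q ^ (2 * k + 2) * y * hV₁)
  · linear_combination
      D * ((1 - z ^ 2 * q ^ (4 * k + 2)) * hV₂ + y * hV₁ + q ^ (2 * k + 2) * hU₁)

section TwoStep

variable {g f : ℕ → R}

theorem three_term_of_two_step
    (hg : ∀ k, (1 - q ^ (4 * (k + 1))) * g (k + 1) =
      (1 + y * z * q ^ (4 * k + 3)) * g k + q ^ (2 * k) * (y * z * q + y ^ 2 * q ^ 2) * f k)
    (hf : ∀ k, (1 - q ^ (4 * (k + 1))) * f (k + 1) =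
      (y ^ 2 + y * z * q ^ (4 * k + 3)) * f k + q ^ (2 * k) * (y * z * q + q ^ 2) * g k)
    {k : ℕ} (hreg : IsLeftRegular (1 - q ^ (4 * (k + 1)))) :
    (1 - q ^ (4 * (k + 2))) * g (k + 2) =
      (1 + y ^ 2 * q ^ 2 + (y * z * q + y * z * q ^ 3) * q ^ (4 * (k + 1))) * g (k + 1) +
        (y * z * q * (y * z * q ^ 3) * q ^ (4 * k) - y ^ 2 * q ^ 2) * g k := by
  refine hreg ?_
  linear_combination (1 - q ^ (4 * (k + 1))) * hg (k + 1) +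
    q ^ (2 * k + 2) * (y * z * q + y ^ 2 * q ^ 2) * hf k -
      q ^ 2 * (y ^ 2 + y * z * q ^ (4 * k + 3)) * hg k

theorem pow_dvd_sub_of_two_step {k : ℕ}
    (hg : (1 - q ^ (4 * (k + 1))) * g (k + 1) =
      (1 + y * z * q ^ (4 * k + 3)) * g k + q ^ (2 * k) * (y * z * q + y ^ 2 * q ^ 2) * f k) :
    q ^ (2 * k + 1) ∣ g (k + 1) - g k :=
  ⟨q ^ (2 * k + 3) * g (k + 1) + y * z * q ^ (2 * k + 2) * g k + (y * z + y ^ 2 * q) * f k, by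
    linear_combination hg⟩

end TwoStep

end Recurrences

theorem prod_range_mul_of_mul_eq {M : Type*} [CommMonoid M] {A B s : ℕ → M}
    (h : ∀ k, A k * s k = B k * s (k + 1)) (K : ℕ) :
    (∏ k ∈ Finset.range K, A k) * s 0 = (∏ k ∈ Finset.range K, B k) * s K := by
  induction K with
  | zero => simp
  | succ K ih =>
    rw [Finset.prod_range_succ, mul_right_comm, ih, mul_right_comm, mul_assoc, h,
      ← mul_assoc, ← Finset.prod_range_succ]

section QDifference

open PowerSeries

variable {R : Type*} [CommRing R] {Q a b c d : R}

theorem mk_qDifference_eq {g : ℕ → R} (hone : (1 - Q) * g 1 = (c + d - a - b) * g 0)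
    (hrec : ∀ n, (1 - Q ^ (n + 2)) * g (n + 2) =
      ((c + d) * Q ^ (n + 1) - a - b) * g (n + 1) + (c * d * Q ^ n - a * b) * g n) :
    (1 + C a * X) * ((1 + C b * X) * mk g) =
      (1 + C c * X) * ((1 + C d * X) * rescale Q (mk g)) := by
  ext n
  simp only [add_mul, mul_add, one_mul, mul_assoc, map_add]
  match n with
  | 0 => simp
  | 1 =>
    simp only [coeff_mk, coeff_rescale, coeff_C_mul, coeff_succ_X_mul, coeff_zero_X_mul]
    linear_combination hone
  | n + 2 =>
    simp only [coeff_mk, coeff_rescale, coeff_C_mul, coeff_succ_X_mul]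
    linear_combination hrec n

theorem qDifference_eq_of_one_add_mul {p : R⟦X⟧}
    (hp : (1 + C a * X) * ((1 + C b * X) * p) =
      (1 + C c * X) * ((1 + C d * X) * rescale Q p)) :
    (1 + C (a * Q) * X) * ((1 + C b * X) * ((1 + C a * X) * p)) =
      (1 + C c * X) * ((1 + C d * X) * rescale Q ((1 + C a * X) * p)) := by
  have hscale : rescale Q (1 + C a * X) = 1 + C (a * Q) * X := by
    have hC : rescale Q (C a) = C a := by
      ext n
      cases n <;> simp [coeff_rescale, coeff_C]
    rw [map_add, map_one, map_mul, hC, rescale_X, map_mul, mul_assoc]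
  rw [map_mul (rescale Q), hscale]
  linear_combination (1 + C (a * Q) * X) * hp

theorem sum_coeff_one_add_C_neg_one_mul_X_mul_mk (g : ℕ → R) (n : ℕ) :
    ∑ k ∈ Finset.range (n + 1),
      coeff k ((1 + C (-1) * X) * mk g) = g n := by
  induction n with
  | zero => simp
  | succ n ih =>
    rw [Finset.sum_range_succ, ih, add_mul, mul_assoc]
    simp

variable [TopologicalSpace R] [IsTopologicalRing R]

theorem hasSum_coeff_one_add_C_mul_X_mul {p : R⟦X⟧} {t s : R} (c : R)
    (h : HasSum (fun n => coeff n p * t ^ n) s) :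
    HasSum (fun n => coeff n ((1 + C c * X) * p) * t ^ n) ((1 + c * t) * s) := by
  have hshift : HasSum (fun n => coeff n (C c * (X * p)) * t ^ n) (c * t * s) := by
    refine (hasSum_nat_add_iff' 1).1 ?_
    rw [Finset.sum_range_one, coeff_C_mul, coeff_zero_X_mul, mul_zero, zero_mul, sub_zero]
    refine (h.mul_left (c * t)).congr_fun fun n => ?_
    rw [coeff_C_mul, coeff_succ_X_mul]
    ring
  rw [one_add_mul (c * t)]
  refine (h.add hshift).congr_fun fun n => ?_
  rw [add_mul, one_mul, mul_assoc, map_add, add_mul]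

theorem eval_qDifference_eq [T2Space R] {p : R⟦X⟧} {t s s' : R}
    (hp : (1 + C a * X) * ((1 + C b * X) * p) =
      (1 + C c * X) * ((1 + C d * X) * rescale Q p))
    (hs : HasSum (fun n => coeff n p * t ^ n) s)
    (hs' : HasSum (fun n => coeff n p * (Q * t) ^ n) s') :
    (1 + a * t) * ((1 + b * t) * s) = (1 + c * t) * ((1 + d * t) * s') := by
  have hrescale : HasSum (fun n => coeff n (rescale Q p) * t ^ n) s' := by
    refine hs'.congr_fun fun n => ?_
    rw [coeff_rescale, mul_pow]
    ring
  have hleft := hasSum_coeff_one_add_C_mul_X_mul a (hasSum_coeff_one_add_C_mul_X_mul b hs)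
  rw [hp] at hleft
  exact hleft.unique
    (hasSum_coeff_one_add_C_mul_X_mul c (hasSum_coeff_one_add_C_mul_X_mul d hrescale))

end QDifference

section Convergence

open MvPowerSeries
open scoped MvPowerSeries.WithPiTopology

variable {σ R : Type*} [CommRing R] {i : σ} {f : ℕ → MvPowerSeries σ R}

theorem tendsto_order_of_X_pow_dvd (h : ∀ n, X i ^ n ∣ f n) :
    Tendsto (fun n => (f n).order) atTop (𝓝 ⊤) := by
  have hle (n : ℕ) : (n : ℕ∞) ≤ (f n).order :=
    nat_le_order fun d hd => X_pow_dvd_iff.1 (h n) d ((Finsupp.le_degree i d).trans_lt hd)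
  refine ENat.tendsto_nhds_top_iff_natCast_lt.2 fun m => ?_
  filter_upwards [eventually_gt_atTop m] with n hn
  exact (Nat.cast_lt.2 hn).trans_le (hle n)

variable [TopologicalSpace R]

theorem summable_of_X_pow_dvd (h : ∀ n, X i ^ n ∣ f n) : Summable f :=
  WithPiTopology.summable_of_tendsto_order_atTop_nhds_top (tendsto_order_of_X_pow_dvd h)

theorem tendsto_zero_of_X_pow_dvd [IsTopologicalRing R] (h : ∀ n, X i ^ n ∣ f n) :
    Tendsto f atTop (𝓝 0) :=
  (summable_of_X_pow_dvd h).tendsto_atTop_zero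

theorem multipliable_of_X_pow_dvd_sub_one (h : ∀ n, X i ^ n ∣ f n - 1) : Multipliable f := by
  simpa using WithPiTopology.multipliable_one_add_of_tendsto_order_atTop_nhds_top
    (tendsto_order_of_X_pow_dvd h)

theorem constantCoeff_tprod_eq_one [T2Space R] {ι : Type*} {u : ι → MvPowerSeries σ R}
    (hu : Multipliable u) (h : ∀ n, constantCoeff (u n) = 1) :
    constantCoeff (∏' n, u n) = 1 := by
  rw [hu.map_tprod _ (WithPiTopology.continuous_constantCoeff R)]
  simp [h]

variable {Q : MvPowerSeries σ R}

theorem multipliable_one_add_mul_pow (hQ : X i ∣ Q) (a : MvPowerSeries σ R) :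
    Multipliable fun k => 1 + a * Q ^ k :=
  multipliable_of_X_pow_dvd_sub_one fun k => by
    simpa using (pow_dvd_pow_of_dvd hQ k).mul_left a

variable [IsTopologicalRing R] [T2Space R] {p : PowerSeries (MvPowerSeries σ R)}

theorem tendsto_tsum_coeff_mul_pow (hQ : X i ∣ Q)
    (hp : ∀ n, X i ^ n ∣ PowerSeries.coeff n p) :
    Tendsto (fun k => ∑' n, PowerSeries.coeff n p * (Q ^ k) ^ n) atTop
      (𝓝 (PowerSeries.coeff 0 p)) := by
  have hsplit (k : ℕ) : ∑' n, PowerSeries.coeff n p * (Q ^ k) ^ n =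
      PowerSeries.coeff 0 p + Q ^ k * ∑' n, PowerSeries.coeff (n + 1) p * (Q ^ k) ^ n := by
    have htail : Summable fun n => PowerSeries.coeff (n + 1) p * (Q ^ k) ^ n :=
      summable_of_X_pow_dvd fun n => ((pow_dvd_pow _ n.le_succ).trans (hp _)).mul_right _
    rw [(summable_of_X_pow_dvd fun n => (hp n).mul_right _).tsum_eq_zero_add, pow_zero, mul_one,
      ← htail.tsum_mul_left]
    congr 2
    funext n
    ring
  simp_rw [hsplit]
  simpa using (tendsto_zero_of_X_pow_dvd fun k =>
    (pow_dvd_pow_of_dvd hQ k).mul_right _).const_add (PowerSeries.coeff 0 p)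

theorem tsum_coeff_mul_tprod_eq {a b c d : MvPowerSeries σ R} (hQ : X i ∣ Q)
    (hp : ∀ n, X i ^ n ∣ PowerSeries.coeff n p)
    (heq : (1 + PowerSeries.C a * PowerSeries.X) * ((1 + PowerSeries.C b * PowerSeries.X) * p) =
      (1 + PowerSeries.C c * PowerSeries.X) *
        ((1 + PowerSeries.C d * PowerSeries.X) * PowerSeries.rescale Q p)) :
    (∏' k, (1 + a * Q ^ k)) * (∏' k, (1 + b * Q ^ k)) * ∑' n, PowerSeries.coeff n p =
      (∏' k, (1 + c * Q ^ k)) * (∏' k, (1 + d * Q ^ k)) * PowerSeries.coeff 0 p := by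
  set s : ℕ → MvPowerSeries σ R := fun k => ∑' n, PowerSeries.coeff n p * (Q ^ k) ^ n with hs
  have hsum (k : ℕ) : HasSum (fun n => PowerSeries.coeff n p * (Q ^ k) ^ n) (s k) :=
    (summable_of_X_pow_dvd fun n => (hp n).mul_right _).hasSum
  have hstep (k : ℕ) : (1 + a * Q ^ k) * (1 + b * Q ^ k) * s k =
      (1 + c * Q ^ k) * (1 + d * Q ^ k) * s (k + 1) := by
    rw [mul_assoc, mul_assoc]
    exact eval_qDifference_eq heq (hsum k) (by simpa only [pow_succ'] using hsum (k + 1))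
  have hprod (e : MvPowerSeries σ R) :
      Tendsto (fun K => ∏ k ∈ Finset.range K, (1 + e * Q ^ k)) atTop
        (𝓝 (∏' k, (1 + e * Q ^ k))) :=
    (multipliable_one_add_mul_pow hQ e).hasProd.tendsto_prod_nat
  have hs_zero : s 0 = ∑' n, PowerSeries.coeff n p := by simp [hs]
  rw [← hs_zero]
  refine tendsto_nhds_unique (((hprod a).mul (hprod b)).mul_const (s 0)) ?_
  simp_rw [← Finset.prod_mul_distrib, prod_range_mul_of_mul_eq hstep, Finset.prod_mul_distrib]
  exact ((hprod c).mul (hprod d)).mul (tendsto_tsum_coeff_mul_pow hQ hp)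

end Convergence

section InfiniteProduct

instance : IsTopologicalRing PS3 :=
  MvPowerSeries.WithPiTopology.instIsTopologicalRing (Fin 3) ℤ

instance : T2Space PS3 :=
  MvPowerSeries.WithPiTopology.instT2Space

theorem q_dvd_q_pow_four : MvPowerSeries.X 2 ∣ q ^ 4 :=
  dvd_pow_self q four_ne_zero

/-- The infinite product `∏_{k ≥ 0} (1 + a q^{4k})`, i.e. the `q`-Pochhammer symbol
`(-a; q⁴)_∞`. -/
noncomputable def pochhammerSeries (a : PS3) : PS3 :=
  ∏' k : ℕ, (1 + a * (q ^ 4) ^ k)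

theorem multipliable_pochhammerSeries (a : PS3) : Multipliable fun k => 1 + a * (q ^ 4) ^ k :=
  multipliable_one_add_mul_pow q_dvd_q_pow_four a

theorem tendsto_evenCleared_boundedSeries :
    Tendsto (evenCleared q z boundedSeries) atTop
      (𝓝 (pochhammerSeries (-(z ^ 2 * q ^ 2)) * lhsSeries)) := by
  have hprod : Tendsto (fun n => ∏ j ∈ Finset.range n, (1 - z ^ 2 * q ^ (4 * j + 2))) atTop
      (𝓝 (pochhammerSeries (-(z ^ 2 * q ^ 2)))) := by
    refine (multipliable_pochhammerSeries _).hasProd.tendsto_prod_nat.congr fun n =>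
      Finset.prod_congr rfl fun j _ => ?_
    ring
  exact hprod.mul (tendsto_boundedSeries.comp (tendsto_id.const_mul_atTop' two_pos))

theorem isLeftRegular_one_sub_q_pow (k : ℕ) : IsLeftRegular (1 - q ^ (4 * (k + 1))) := by
  refine IsLeftCancelMulZero.mul_left_cancel_of_ne_zero fun h => ?_
  simpa [q] using congrArg MvPowerSeries.constantCoeff h

theorem evenCleared_boundedSeries_qDifference_eq :
    (1 + PowerSeries.C (-1) * PowerSeries.X) *
        ((1 + PowerSeries.C (-(y ^ 2 * q ^ 2)) * PowerSeries.X) *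
          PowerSeries.mk (evenCleared q z boundedSeries)) =
      (1 + PowerSeries.C (y * z * q) * PowerSeries.X) *
        ((1 + PowerSeries.C (y * z * q ^ 3) * PowerSeries.X) *
          PowerSeries.rescale (q ^ 4) (PowerSeries.mk (evenCleared q z boundedSeries))) := by
  have htwoStep := evenCleared_two_step boundedSeries_succ coBoundedSeries_succ
  refine mk_qDifference_eq ?_ fun n => ?_
  · have hzero : evenCleared q z coBoundedSeries 0 = evenCleared q z boundedSeries 0 := by
      rw [evenCleared_zero, evenCleared_zero, boundedSeries_zero, coBoundedSeries_zero]
    have h := (htwoStep 0).1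
    rw [hzero] at h
    linear_combination h
  · linear_combination three_term_of_two_step (fun k => (htwoStep k).1) (fun k => (htwoStep k).2)
      (isLeftRegular_one_sub_q_pow n)

theorem pochhammerSeries_mul_lhsSeries :
    pochhammerSeries (-q ^ 4) * pochhammerSeries (-(y ^ 2 * q ^ 2)) *
        (pochhammerSeries (-(z ^ 2 * q ^ 2)) * lhsSeries) =
      pochhammerSeries (y * z * q) * pochhammerSeries (y * z * q ^ 3) := by
  set g := evenCleared q z boundedSeries with hg
  set p := (1 + PowerSeries.C (-1) * PowerSeries.X) * PowerSeries.mk g with hp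
  have hcoeff_zero : PowerSeries.coeff 0 p = 1 := by
    simp [hp, hg, evenCleared_zero, boundedSeries_zero]
  have hdvd (n : ℕ) : MvPowerSeries.X 2 ^ n ∣ PowerSeries.coeff n p := by
    match n with
    | 0 => simp
    | n + 1 =>
      have hcoeff : PowerSeries.coeff (n + 1) p = g (n + 1) - g n := by
        rw [hp, add_mul, mul_assoc]
        simp [sub_eq_add_neg]
      rw [hcoeff]
      exact (pow_dvd_pow q (by omega)).trans (pow_dvd_sub_of_two_step
        (evenCleared_two_step boundedSeries_succ coBoundedSeries_succ n).1)
  have hsummable : Summable fun n => PowerSeries.coeff n p := summable_of_X_pow_dvd hdvd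
  have hsum : ∑' n, PowerSeries.coeff n p = pochhammerSeries (-(z ^ 2 * q ^ 2)) * lhsSeries :=
    tendsto_nhds_unique
      ((tendsto_add_atTop_iff_nat 1).2 hsummable.hasSum.tendsto_sum_nat)
      (tendsto_evenCleared_boundedSeries.congr fun n =>
        (sum_coeff_one_add_C_neg_one_mul_X_mul_mk g n).symm)
  have h := tsum_coeff_mul_tprod_eq q_dvd_q_pow_four hdvd
    (qDifference_eq_of_one_add_mul evenCleared_boundedSeries_qDifference_eq)
  rw [hcoeff_zero, mul_one, neg_one_mul] at h
  rw [← hsum]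
  exact h

theorem hasProd_factor_num :
    HasProd (fun j : ℕ => 1 + y * z * q ^ (2 * (j + 1) - 1))
      (pochhammerSeries (y * z * q) * pochhammerSeries (y * z * q ^ 3)) := by
  refine HasProd.even_mul_odd ?_ ?_
  · refine (multipliable_pochhammerSeries _).hasProd.congr_fun fun k => ?_
    rw [show 2 * (2 * k + 1) - 1 = 4 * k + 1 by omega]
    ring
  · refine (multipliable_pochhammerSeries _).hasProd.congr_fun fun k => ?_
    rw [show 2 * (2 * k + 1 + 1) - 1 = 4 * k + 3 by omega]
    ring

/-- The denominator of `factor j`. -/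
noncomputable def factorDenom (j : ℕ) : PS3 :=
  (1 - q ^ (4 * (j + 1))) * (1 - z ^ 2 * q ^ (4 * (j + 1) - 2)) *
    (1 - y ^ 2 * q ^ (4 * (j + 1) - 2))

theorem factorDenom_eq (j : ℕ) :
    factorDenom j = (1 + -q ^ 4 * (q ^ 4) ^ j) * (1 + -(z ^ 2 * q ^ 2) * (q ^ 4) ^ j) *
      (1 + -(y ^ 2 * q ^ 2) * (q ^ 4) ^ j) := by
  rw [factorDenom, show 4 * (j + 1) - 2 = 4 * j + 2 by omega]
  ring

theorem hasProd_factorDenom :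
    HasProd factorDenom (pochhammerSeries (-q ^ 4) * pochhammerSeries (-(z ^ 2 * q ^ 2)) *
      pochhammerSeries (-(y ^ 2 * q ^ 2))) :=
  (((multipliable_pochhammerSeries _).hasProd.mul (multipliable_pochhammerSeries _).hasProd).mul
    (multipliable_pochhammerSeries _).hasProd).congr_fun factorDenom_eq

theorem constantCoeff_factorDenom (j : ℕ) : MvPowerSeries.constantCoeff (factorDenom j) = 1 := by
  simp [factorDenom_eq, q]

theorem factor_mul_factorDenom (j : ℕ) :
    factor j * factorDenom j = 1 + y * z * q ^ (2 * (j + 1) - 1) := by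
  rw [factor, mul_assoc, ← factorDenom,
    MvPowerSeries.invOfUnit_mul _ _ (constantCoeff_factorDenom j), mul_one]

theorem q_pow_dvd_factorDenom_sub_one (j : ℕ) : q ^ j ∣ factorDenom j - 1 := by
  have hfactor (a : PS3) : q ^ j ∣ 1 + a * (q ^ 4) ^ j - 1 := by
    rw [add_sub_cancel_left]
    exact (pow_dvd_pow_of_dvd q_dvd_q_pow_four j).mul_left a
  simpa only [factorDenom_eq, mul_one] using
    dvd_mul_sub_mul (dvd_mul_sub_mul (hfactor _) (hfactor _)) (hfactor _)

theorem q_pow_dvd_factor_sub_one (j : ℕ) : q ^ j ∣ factor j - 1 := by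
  have hunit : IsUnit (factorDenom j) :=
    MvPowerSeries.isUnit_iff_constantCoeff.2 (by simp [constantCoeff_factorDenom])
  have hdvd : q ^ j ∣ (factor j - 1) * factorDenom j := by
    have hnum : q ^ j ∣ y * z * q ^ (2 * (j + 1) - 1) :=
      (pow_dvd_pow q (by omega)).mul_left _
    convert hnum.sub (q_pow_dvd_factorDenom_sub_one j) using 1
    linear_combination factor_mul_factorDenom j
  exact hunit.dvd_mul_right.1 hdvd

theorem multipliable_factor : Multipliable factor :=
  multipliable_of_X_pow_dvd_sub_one q_pow_dvd_factor_sub_one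

theorem tprod_factorDenom_ne_zero : ∏' j, factorDenom j ≠ 0 := by
  have hone : MvPowerSeries.constantCoeff (∏' j, factorDenom j) = 1 :=
    constantCoeff_tprod_eq_one hasProd_factorDenom.multipliable constantCoeff_factorDenom
  intro hzero
  simp [hzero] at hone

theorem lhsSeries_mul_tprod_factorDenom :
    lhsSeries * ∏' j, factorDenom j = ∏' j : ℕ, (1 + y * z * q ^ (2 * (j + 1) - 1)) := by
  rw [hasProd_factorDenom.tprod_eq, hasProd_factor_num.tprod_eq]
  linear_combination pochhammerSeries_mul_lhsSeries

end InfiniteProduct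

/-- Andrews' identity: `∑_{n,r,s≥0} S(r,s;n) zʳ yˢ qⁿ
  = ∏_{j≥1} (1 + yzq^{2j−1}) / ((1 − q^{4j})(1 − z²q^{4j−2})(1 − y²q^{4j−2}))`
as formal power series in `ℤ[[z,y,q]]`, the infinite product being the convergent
(coefficientwise) product of formal power series. -/
theorem andrews_stanley_identity : lhsSeries = ∏' j : ℕ, factor j := by
  refine mul_right_cancel₀ tprod_factorDenom_ne_zero ?_
  calc lhsSeries * ∏' j, factorDenom j
      = ∏' j : ℕ, (1 + y * z * q ^ (2 * (j + 1) - 1)) := lhsSeries_mul_tprod_factorDenom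
    _ = ∏' j, factor j * factorDenom j := tprod_congr fun j => (factor_mul_factorDenom j).symm
    _ = (∏' j, factor j) * ∏' j, factorDenom j :=
      multipliable_factor.tprod_mul hasProd_factorDenom.multipliable
end

section
/- Every partition κ can be written uniquely as the union λ ∪ μ of a partition λ in which no odd part is repeated and a partition μ all of whose parts are odd and occur with even multiplicity. Explicitly, λ = ⟨1^{P(m₁(κ))} 2^{m₂(κ)} 3^{P(m₃(κ))} 4^{m₄(κ)} ⋯⟩ and μ = ⟨1^{m₁(κ)−P(m₁(κ))} 3^{m₃(κ)−P(m₃(κ))} 5^{m₅(κ)−P(m₅(κ))} ⋯⟩, where P(i) is 0 if i is even and 1 if i is odd. In other words, the map α(κ) = (λ, μ) is a bijection from the set 𝒫 of all partitions onto 𝒜 × ℬ, where 𝒜 is the set of partitions with no repeated odd part and ℬ is the set of partitions having only odd parts, each of even multiplicity. -/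
/-- A partition, modeled as a finite multiset of positive integers (its parts);
`κ.count k` is the multiplicity `m_k(κ)`, and the union of two partitions is
multiset addition (merging the parts). -/
def IsPartitionM (κ : Multiset ℕ) : Prop := ∀ x ∈ κ, 0 < x

/-- `𝒜`: partitions with no repeated odd part. -/
def memA (lam : Multiset ℕ) : Prop :=
  IsPartitionM lam ∧ ∀ k, Odd k → lam.count k ≤ 1

/-- `ℬ`: partitions having only odd parts, each of even multiplicity. -/
def memB (mu : Multiset ℕ) : Prop :=
  IsPartitionM mu ∧ (∀ x ∈ mu, Odd x) ∧ ∀ k, Even (mu.count k)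

/-!
The splitting is decided one value at a time. At an odd `k` the multiplicities of `k` in `λ` and `μ`
add up to `m_k(κ)`, the first being at most `1` and the second even, so they are the remainder of
`m_k(κ)` modulo `2` and the rest; at an even `k` the multiplicity in `μ` is `0`. Nothing here is
specific to parity: division with remainder by any `d > 0`, at the elements of any type that satisfy
a given predicate, works in the same way.
-/

section ResidueSplitting

variable {α : Type*} [DecidableEq α] {p : α → Prop} {d : ℕ} {s r t : Multiset α}

/-- `s = r + t` is a division with remainder of the multiplicities of `s` by `d`, performed only at
the elements satisfying `p`: there `r` carries the remainders and `t` the multiples of `d`, while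
all other elements are left to `r`. The decomposition `κ = λ ∪ μ` of the theorem is the case
`p = Odd`, `d = 2`. -/
structure IsResidueSplitting (p : α → Prop) (d : ℕ) (s r t : Multiset α) : Prop where
  add_eq : r + t = s
  count_lt : ∀ a, p a → r.count a < d
  of_mem : ∀ a ∈ t, p a
  dvd_count : ∀ a, d ∣ t.count a

/-- The multiset `μ` of the theorem: the elements of `s` satisfying `p`, each with its multiplicity
rounded down to a multiple of `d`. -/
noncomputable def multiplePart (p : α → Prop) [DecidablePred p] (d : ℕ) (s : Multiset α) :
    Multiset α :=
  (Finsupp.toMultiset (s.toFinsupp.mapRange (fun m => m - m % d) (Nat.zero_sub _))).filter p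

/-- The multiset `λ` of the theorem: what remains of `s` after removing `multiplePart p d s`. -/
noncomputable def residuePart (p : α → Prop) [DecidablePred p] (d : ℕ) (s : Multiset α) :
    Multiset α :=
  s - multiplePart p d s

section Existence

variable (p) [DecidablePred p]

theorem count_multiplePart (d : ℕ) (s : Multiset α) (a : α) :
    (multiplePart p d s).count a = if p a then s.count a - s.count a % d else 0 := by
  simp [multiplePart, Multiset.count_filter, Finsupp.count_toMultiset]

theorem count_residuePart (d : ℕ) (s : Multiset α) (a : α) :
    (residuePart p d s).count a = if p a then s.count a % d else s.count a := by
  rw [residuePart, Multiset.count_sub, count_multiplePart]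
  split_ifs
  · exact Nat.sub_sub_self (Nat.mod_le _ _)
  · exact Nat.sub_zero _

theorem multiplePart_le (d : ℕ) (s : Multiset α) : multiplePart p d s ≤ s := by
  refine Multiset.le_iff_count.2 fun a => ?_
  rw [count_multiplePart]
  split_ifs
  · exact Nat.sub_le _ _
  · exact Nat.zero_le _

theorem isResidueSplitting_residuePart_multiplePart (hd : 0 < d) (s : Multiset α) :
    IsResidueSplitting p d s (residuePart p d s) (multiplePart p d s) where
  add_eq := Multiset.sub_add_cancel (multiplePart_le p d s)
  count_lt a ha := by
    rw [count_residuePart, if_pos ha]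
    exact Nat.mod_lt _ hd
  of_mem _ ha := Multiset.of_mem_filter ha
  dvd_count a := by
    rw [count_multiplePart]
    split_ifs
    · exact Nat.dvd_sub_mod _
    · exact dvd_zero d

end Existence

namespace IsResidueSplitting

theorem count_right_eq_zero (h : IsResidueSplitting p d s r t) {a : α} (ha : ¬p a) :
    t.count a = 0 :=
  Multiset.count_eq_zero.2 fun hat => ha (h.of_mem a hat)

variable [DecidablePred p]

theorem count_left (h : IsResidueSplitting p d s r t) (a : α) :
    r.count a = if p a then s.count a % d else s.count a := by
  rw [← h.add_eq, Multiset.count_add]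
  split_ifs with ha
  · obtain ⟨c, hc⟩ := h.dvd_count a
    rw [hc, Nat.add_mul_mod_self_left, Nat.mod_eq_of_lt (h.count_lt a ha)]
  · rw [h.count_right_eq_zero ha, add_zero]

theorem left_eq (h : IsResidueSplitting p d s r t) : r = residuePart p d s :=
  Multiset.ext.2 fun a => (h.count_left a).trans (count_residuePart p d s a).symm

theorem right_eq (h : IsResidueSplitting p d s r t) : t = multiplePart p d s := by
  refine add_left_cancel (a := r) ?_
  rw [h.add_eq, h.left_eq, residuePart, Multiset.sub_add_cancel (multiplePart_le p d s)]

end IsResidueSplitting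

theorem alpha_bijection_general (p : α → Prop) [DecidablePred p] (hd : 0 < d) (s : Multiset α) :
    (∃! q : Multiset α × Multiset α, IsResidueSplitting p d s q.1 q.2) ∧
    (∀ r t : Multiset α, IsResidueSplitting p d s r t →
      (∀ a, r.count a = if p a then s.count a % d else s.count a) ∧
      (∀ a, t.count a = if p a then s.count a - s.count a % d else 0)) := by
  refine ⟨⟨(residuePart p d s, multiplePart p d s),
    isResidueSplitting_residuePart_multiplePart p hd s,
    fun _ h => Prod.ext h.left_eq h.right_eq⟩, fun r t h => ⟨h.count_left, fun a => ?_⟩⟩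
  rw [h.right_eq, count_multiplePart]

end ResidueSplitting

theorem isPartitionM_add {lam mu : Multiset ℕ} :
    IsPartitionM (lam + mu) ↔ IsPartitionM lam ∧ IsPartitionM mu := by
  simp only [IsPartitionM, Multiset.mem_add, or_imp, forall_and]

theorem memA_and_memB_and_add_eq_iff {κ lam mu : Multiset ℕ} (hκ : IsPartitionM κ) :
    memA lam ∧ memB mu ∧ lam + mu = κ ↔ IsResidueSplitting Odd 2 κ lam mu := by
  constructor
  · rintro ⟨⟨-, hlam⟩, ⟨-, hodd, heven⟩, hadd⟩
    exact ⟨hadd, fun k hk => Nat.lt_succ_of_le (hlam k hk), hodd, fun k => (heven k).two_dvd⟩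
  · rintro ⟨rfl, hlt, hodd, hdvd⟩
    obtain ⟨hlam, hmu⟩ := isPartitionM_add.1 hκ
    exact ⟨⟨hlam, fun k hk => Nat.le_of_lt_succ (hlt k hk)⟩,
      ⟨hmu, hodd, fun k => even_iff_two_dvd.2 (hdvd k)⟩, rfl⟩

/-- Every partition `κ` can be written uniquely as the union `λ ∪ μ` of a partition
`λ ∈ 𝒜` (no repeated odd part) and a partition `μ ∈ ℬ` (only odd parts, of even
multiplicity); i.e. `α : κ ↦ (λ, μ)` is a bijection `𝒫 → 𝒜 × ℬ`.  Explicitly, the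
unique such pair is given by `m_k(λ) = P(m_k(κ))` for odd `k`, `m_k(λ) = m_k(κ)` for
even `k`, and `m_k(μ) = m_k(κ) − P(m_k(κ))` for odd `k`, `m_k(μ) = 0` for even `k`,
where `P(m) = m % 2` is the parity function. -/
theorem alpha_bijection (κ : Multiset ℕ) (hκ : IsPartitionM κ) :
    (∃! p : Multiset ℕ × Multiset ℕ, memA p.1 ∧ memB p.2 ∧ p.1 + p.2 = κ) ∧
    (∀ lam mu : Multiset ℕ, memA lam → memB mu → lam + mu = κ →
      (∀ k, lam.count k = if Odd k then κ.count k % 2 else κ.count k) ∧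
      (∀ k, mu.count k = if Odd k then κ.count k - κ.count k % 2 else 0)) := by
  simpa only [and_imp, ← memA_and_memB_and_add_eq_iff hκ] using
    alpha_bijection_general Odd two_pos κ
end

section
/- Let κ be a partition and let α(κ) = (λ, μ), where λ = ⟨1^{P(m₁(κ))} 2^{m₂(κ)} 3^{P(m₃(κ))} 4^{m₄(κ)} ⋯⟩ and μ = ⟨1^{m₁(κ)−P(m₁(κ))} 3^{m₃(κ)−P(m₃(κ))} ⋯⟩. Then the number of odd parts of λ equals the number of distinct odd integers occurring in κ with odd multiplicity, and the number of parts of μ equals the number of odd parts of μ, which equals 𝒪(κ) minus the number of distinct odd integers occurring in κ with odd multiplicity. -/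
/-- `𝒪(κ)`: the number of odd parts of the partition `κ`. -/
def oddPartsM (κ : Multiset ℕ) : ℕ := (κ.filter (fun x => Odd x)).card

/-- The number of distinct odd integers occurring in `κ` with odd multiplicity. -/
def oddMultOdd (κ : Multiset ℕ) : ℕ :=
  (κ.toFinset.filter (fun k => Odd k ∧ Odd (κ.count k))).card

/-!
The statistic `oddPartsM` depends only on the multiplicities of the odd integers and is additive.
On the odd integers, `lam` has the multiplicities of `κ` reduced modulo `2`, hence those of the set
of integers of odd multiplicity in `κ`, while `mu + lam` has the multiplicities of `κ` itself.
-/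

section Multiplicities

variable {α : Type*} [DecidableEq α]

theorem filter_eq_filter_iff_count_eq {p : α → Prop} [DecidablePred p] {s t : Multiset α} :
    s.filter p = t.filter p ↔ ∀ a, p a → s.count a = t.count a := by
  simp only [Multiset.ext, Multiset.count_filter]
  exact forall_congr' fun a => by by_cases ha : p a <;> simp [ha]

/-- The set of elements occurring in `s` with odd multiplicity. As a multiset, it is `s` with every
multiplicity reduced modulo `2`. -/
def oddCountFinset (s : Multiset α) : Finset α := s.toFinset.filter fun a => Odd (s.count a)

theorem mem_oddCountFinset {s : Multiset α} {a : α} : a ∈ oddCountFinset s ↔ Odd (s.count a) := by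
  rw [oddCountFinset, Finset.mem_filter, Multiset.mem_toFinset, and_iff_right_iff_imp]
  exact fun hodd => Multiset.count_pos.mp hodd.pos

theorem count_val_oddCountFinset (s : Multiset α) (a : α) :
    (oddCountFinset s).val.count a = s.count a % 2 := by
  simp only [Multiset.count_eq_of_nodup (Finset.nodup _), Finset.mem_val, mem_oddCountFinset,
    Nat.odd_iff]
  split_ifs <;> lia

end Multiplicities

theorem oddPartsM_congr {κ ν : Multiset ℕ} (h : ∀ k, Odd k → κ.count k = ν.count k) :
    oddPartsM κ = oddPartsM ν :=
  congrArg Multiset.card (filter_eq_filter_iff_count_eq.mpr h)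

theorem oddPartsM_add (κ ν : Multiset ℕ) : oddPartsM (κ + ν) = oddPartsM κ + oddPartsM ν := by
  simp only [oddPartsM, Multiset.filter_add, Multiset.card_add]

theorem oddPartsM_eq_card {κ : Multiset ℕ} (h : ∀ k ∈ κ, Odd k) : oddPartsM κ = κ.card :=
  congrArg Multiset.card (Multiset.filter_eq_self.mpr h)

theorem oddPartsM_val_oddCountFinset (κ : Multiset ℕ) :
    oddPartsM (oddCountFinset κ).val = oddMultOdd κ := by
  rw [oddPartsM, oddMultOdd, ← Finset.filter_val, Finset.card_val, oddCountFinset,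
    Finset.filter_filter]
  simp only [and_comm]

/-- Let `α(κ) = (λ, μ)` where `λ` takes, for each odd `k`, `P(m_k(κ)) = m_k(κ) % 2`
copies of `k` and, for each even `k`, all `m_k(κ)` copies of `k`, while `μ` takes the
remaining `m_k(κ) − P(m_k(κ))` copies of each odd `k`.  Then `𝒪(λ)` equals the number
`t` of distinct odd integers occurring in `κ` with odd multiplicity, and
`l(μ) = 𝒪(μ) = 𝒪(κ) − t`. -/
theorem alpha_statistics (κ lam mu : Multiset ℕ) (hκ : IsPartitionM κ)
    (hlam : ∀ k, lam.count k = if Odd k then κ.count k % 2 else κ.count k)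
    (hmu : ∀ k, mu.count k = if Odd k then κ.count k - κ.count k % 2 else 0) :
    oddPartsM lam = oddMultOdd κ ∧
    Multiset.card mu = oddPartsM mu ∧
    oddPartsM mu = oddPartsM κ - oddMultOdd κ := by
  have odd_lam : oddPartsM lam = oddMultOdd κ := calc
    oddPartsM lam = oddPartsM (oddCountFinset κ).val :=
      oddPartsM_congr fun k hk => by rw [hlam, if_pos hk, count_val_oddCountFinset]
    _ = oddMultOdd κ := oddPartsM_val_oddCountFinset κ
  have mu_odd : ∀ k ∈ mu, Odd k := fun k hk => by
    by_contra hk_even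
    exact Multiset.count_ne_zero.mpr hk (by rw [hmu, if_neg hk_even])
  have odd_add : oddPartsM mu + oddMultOdd κ = oddPartsM κ := by
    rw [← odd_lam, ← oddPartsM_add]
    refine oddPartsM_congr fun k hk => ?_
    rw [Multiset.count_add, hmu, hlam, if_pos hk, if_pos hk]
    exact Nat.sub_add_cancel (Nat.mod_le _ 2)
  exact ⟨odd_lam, (oddPartsM_eq_card mu_odd).symm, Nat.eq_sub_of_add_eq odd_add⟩
end

section
/- Let λ = (λ₁, λ₂, …) be a partition with no repeated odd part, and define the sequence ζ = (ζ₁, ζ₂, …) by ζ_{2i−1} = ⌊(λ_i + 1)/2⌋ and ζ_{2i} = ⌊λ_i/2⌋ for all i ≥ 1. Then ζ is a partition (the sequence ζ is nonincreasing), and ζ satisfies ζ_{2i−1} − ζ_{2i} ≤ 1 for all i ≥ 1. -/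
/-- A partition has no repeated odd part: every odd integer occurs at most once
among its parts. -/
def NoRepeatedOddPart (f : ℕ → ℕ) : Prop :=
  ∀ i j, i ≠ j → Odd (f i) → f i ≠ f j

theorem antitone_nat_of_even_odd_step {α : Type*} [Preorder α] {f : ℕ → α}
    (h_even : ∀ i, f (2 * i + 1) ≤ f (2 * i))
    (h_odd : ∀ i, f (2 * (i + 1)) ≤ f (2 * i + 1)) : Antitone f := by
  refine antitone_nat_of_succ_le fun n ↦ ?_
  obtain ⟨i, rfl | rfl⟩ := n.even_or_odd'
  · exact h_even i
  · exact h_odd i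

theorem forall_two_mul_le_of_even_odd {p : ℕ → Prop} {N : ℕ}
    (h_even : ∀ i, N ≤ i → p (2 * i)) (h_odd : ∀ i, N ≤ i → p (2 * i + 1)) :
    ∀ n, 2 * N ≤ n → p n := by
  intro n hn
  obtain ⟨i, rfl | rfl⟩ := n.even_or_odd'
  · exact h_even i (by lia)
  · exact h_odd i (by lia)

theorem add_one_div_two_le_div_two_iff {a b : ℕ} :
    (b + 1) / 2 ≤ a / 2 ↔ b ≤ a ∧ (Odd a → a ≠ b) := by
  rw [Nat.odd_iff]
  lia

theorem NoRepeatedOddPart.succ_add_one_div_two_le {f : ℕ → ℕ} (hodd : NoRepeatedOddPart f)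
    (hf : Antitone f) (i : ℕ) : (f (i + 1) + 1) / 2 ≤ f i / 2 :=
  add_one_div_two_le_div_two_iff.2 ⟨hf i.le_succ, hodd i (i + 1) i.succ_ne_self.symm⟩

/-- Let `λ` be a partition with no repeated odd part and define `ζ` by
`ζ_{2i−1} = ⌊(λ_i + 1)/2⌋` and `ζ_{2i} = ⌊λ_i/2⌋` (in zero-based indexing:
`ζ(2i) = (λ(i) + 1)/2` and `ζ(2i+1) = λ(i)/2`).  Then `ζ` is a partition
(nonincreasing with finitely many nonzero terms) and `ζ_{2i−1} − ζ_{2i} ≤ 1`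
for all `i ≥ 1`. -/
theorem beta_one_lands_in_C (lam zeta : ℕ → ℕ)
    (hlam : IsPartitionFun lam) (hodd : NoRepeatedOddPart lam)
    (hzeta : ∀ i, zeta (2 * i) = (lam i + 1) / 2 ∧ zeta (2 * i + 1) = lam i / 2) :
    IsPartitionFun zeta ∧ ∀ i, zeta (2 * i) ≤ zeta (2 * i + 1) + 1 := by
  obtain ⟨hanti, N, hN⟩ := hlam
  have hzeta_even (i : ℕ) : zeta (2 * i) = (lam i + 1) / 2 := (hzeta i).1
  have hzeta_odd (i : ℕ) : zeta (2 * i + 1) = lam i / 2 := (hzeta i).2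
  have hzeta_anti : Antitone zeta := by
    refine antitone_nat_of_even_odd_step (fun i ↦ ?_) fun i ↦ ?_
    · rw [hzeta_even, hzeta_odd]
      exact Nat.div_le_div_right (lam i).le_succ
    · rw [hzeta_even, hzeta_odd]
      exact hodd.succ_add_one_div_two_le hanti i
  have hzeta_zero : ∀ n, 2 * N ≤ n → zeta n = 0 :=
    forall_two_mul_le_of_even_odd (fun i hi ↦ by simp [hzeta_even, hN i hi])
      fun i hi ↦ by simp [hzeta_odd, hN i hi]
  refine ⟨⟨fun _ _ hij ↦ hzeta_anti hij, 2 * N, hzeta_zero⟩, fun i ↦ ?_⟩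
  rw [hzeta_even, hzeta_odd]
  lia
end

section
/- Let λ be a partition with no repeated odd part and let ζ = β₁(λ) be the partition with ζ_{2i−1} = ⌊(λ_i + 1)/2⌋ and ζ_{2i} = ⌊λ_i/2⌋. Then the number of odd parts of the conjugate partition ζ′ equals the number of odd parts of λ. Equivalently, ζ′_i is odd if and only if 2i − 1 is a part of λ. -/
/-!
A term `λ_j` contributes `⌈λ_j / 2⌉` and `⌊λ_j / 2⌋` to `ζ`, and these are at least `i` exactly when
`λ_j ≥ 2i - 1` and `λ_j ≥ 2i` respectively. Hence `ζ′_i = λ′_{2i-1} + λ′_{2i}`, which exceeds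
`2 λ′_{2i}` by the multiplicity of `2i - 1` in `λ`. That multiplicity is `0` or `1` when no odd part
is repeated.
-/

/-- `zeta` is the image `β₁(lam)`. Indices are zero-based, so the paper's `ζ_{2i-1}` and `ζ_{2i}`
become `zeta (2 * i)` and `zeta (2 * i + 1)`. -/
def IsBetaOne (lam zeta : ℕ → ℕ) : Prop :=
  ∀ i, zeta (2 * i) = (lam i + 1) / 2 ∧ zeta (2 * i + 1) = lam i / 2

theorem IsPartitionFun.finite_support {f : ℕ → ℕ} (hf : IsPartitionFun f) :
    f.support.Finite := by
  obtain ⟨-, N, hN⟩ := hf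
  exact (Set.finite_lt_nat N).subset fun i hi => not_le.mp fun hNi => hi (hN i hNi)

theorem two_mul_add_one_injective : Function.Injective fun n : ℕ => 2 * n + 1 :=
  (add_left_injective 1).comp (mul_right_injective₀ two_ne_zero)

theorem ncard_eq_ncard_even_add_ncard_odd {s : Set ℕ} (heven : {i | 2 * i ∈ s}.Finite)
    (hodd : {i | 2 * i + 1 ∈ s}.Finite) :
    s.ncard = {i | 2 * i ∈ s}.ncard + {i | 2 * i + 1 ∈ s}.ncard := by
  have hunion : s = (2 * ·) '' {i | 2 * i ∈ s} ∪ (2 * · + 1) '' {i | 2 * i + 1 ∈ s} := by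
    ext j
    obtain ⟨k, rfl | rfl⟩ := j.even_or_odd'
    · simp [show ∀ x, 2 * x + 1 ≠ 2 * k by omega]
    · simp [show ∀ x, 2 * x ≠ 2 * k + 1 by omega]
  have hdisj :
      Disjoint ((2 * ·) '' {i | 2 * i ∈ s}) ((2 * · + 1) '' {i | 2 * i + 1 ∈ s}) := by
    rw [Set.disjoint_left]
    rintro _ ⟨a, -, rfl⟩ ⟨b, -, hab⟩
    exact absurd hab (by dsimp only; omega)
  conv_lhs => rw [hunion]
  rw [Set.ncard_union_eq hdisj (heven.image _) (hodd.image _),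
    Set.ncard_image_of_injective _ (mul_right_injective₀ two_ne_zero),
    Set.ncard_image_of_injective _ two_mul_add_one_injective]

theorem odd_ncard_iff_nonempty {α : Type*} {s : Set α} (hs : s.Subsingleton) :
    Odd s.ncard ↔ s.Nonempty := by
  obtain rfl | ⟨a, rfl⟩ := hs.eq_empty_or_singleton <;> simp

section FiniteSupport

variable {f : ℕ → ℕ} (hf : f.support.Finite)
include hf

theorem finite_setOf_succ_le (i : ℕ) : {j | i + 1 ≤ f j}.Finite :=
  hf.subset fun _ hj => Nat.ne_of_gt (Nat.lt_of_lt_of_le i.succ_pos hj)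

theorem conjFun_eq_conjFun_succ_add_ncard (i : ℕ) :
    conjFun f i = conjFun f (i + 1) + {j | f j = i + 1}.ncard := by
  have hunion : {j | i + 1 ≤ f j} = {j | i + 1 + 1 ≤ f j} ∪ {j | f j = i + 1} := by
    ext j
    simp only [Set.mem_ofPred_eq, Set.mem_union]
    omega
  have hdisj : Disjoint {j | i + 1 + 1 ≤ f j} {j | f j = i + 1} :=
    Set.disjoint_left.mpr fun j hle heq => by
      simp only [Set.mem_ofPred_eq] at hle heq
      omega
  have hfin : {j | f j = i + 1}.Finite :=
    (finite_setOf_succ_le hf i).subset fun _ hj => hj.ge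
  simp only [conjFun]
  rw [hunion, Set.ncard_union_eq hdisj (finite_setOf_succ_le hf (i + 1)) hfin]

end FiniteSupport

namespace IsBetaOne

variable {lam zeta : ℕ → ℕ} (hzeta : IsBetaOne lam zeta) (hlam : lam.support.Finite)
include hzeta hlam

theorem conjFun_eq_add (i : ℕ) :
    conjFun zeta i = conjFun lam (2 * i) + conjFun lam (2 * i + 1) := by
  have heven : {j | 2 * j ∈ {k | i + 1 ≤ zeta k}} = {j | 2 * i + 1 ≤ lam j} := by
    ext j
    simp only [Set.mem_ofPred_eq, (hzeta j).1]
    omega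
  have hodd : {j | 2 * j + 1 ∈ {k | i + 1 ≤ zeta k}} = {j | 2 * i + 1 + 1 ≤ lam j} := by
    ext j
    simp only [Set.mem_ofPred_eq, (hzeta j).2]
    omega
  simp only [conjFun]
  rw [ncard_eq_ncard_even_add_ncard_odd (heven ▸ finite_setOf_succ_le hlam _)
    (hodd ▸ finite_setOf_succ_le hlam _), heven, hodd]

theorem odd_conjFun_iff_odd_ncard (i : ℕ) :
    Odd (conjFun zeta i) ↔ Odd {j | lam j = 2 * i + 1}.ncard := by
  have hconj : conjFun zeta i =
      2 * conjFun lam (2 * i + 1) + {j | lam j = 2 * i + 1}.ncard := by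
    rw [hzeta.conjFun_eq_add hlam, conjFun_eq_conjFun_succ_add_ncard hlam (2 * i)]
    ring
  rw [hconj, Nat.odd_add', iff_true_right (even_two_mul _)]

end IsBetaOne

namespace NoRepeatedOddPart

variable {f : ℕ → ℕ} (hf : NoRepeatedOddPart f)
include hf

theorem injOn_setOf_odd : Set.InjOn f {j | Odd (f j)} :=
  fun _ ha _ _ hab => not_imp_not.mp (fun hne => hf _ _ hne ha) hab

theorem subsingleton_setOf_eq {n : ℕ} (hn : Odd n) : {j | f j = n}.Subsingleton := by
  rintro a rfl b hb
  exact hf.injOn_setOf_odd hn (hb ▸ hn : Odd (f b)) hb.symm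

theorem oddParts_eq_ncard : oddParts f = {i | ∃ j, f j = 2 * i + 1}.ncard := by
  have himage : f '' {j | Odd (f j)} = (2 * · + 1) '' {i | ∃ j, f j = 2 * i + 1} := by
    ext n
    constructor
    · rintro ⟨j, ⟨i, hi⟩, rfl⟩
      exact ⟨i, ⟨j, hi⟩, hi.symm⟩
    · rintro ⟨i, ⟨j, hj⟩, rfl⟩
      exact ⟨j, ⟨i, hj⟩, hj⟩
  rw [oddParts, ← hf.injOn_setOf_odd.ncard_image, himage,
    Set.ncard_image_of_injective _ two_mul_add_one_injective]

end NoRepeatedOddPart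

theorem oddParts_conj_beta_one_general {lam zeta : ℕ → ℕ} (hlam : lam.support.Finite)
    (hodd : NoRepeatedOddPart lam) (hzeta : IsBetaOne lam zeta) :
    oddParts (conjFun zeta) = oddParts lam ∧
    ∀ i : ℕ, Odd (conjFun zeta i) ↔ ∃ j, lam j = 2 * i + 1 := by
  have odd_iff (i : ℕ) : Odd (conjFun zeta i) ↔ ∃ j, lam j = 2 * i + 1 :=
    (hzeta.odd_conjFun_iff_odd_ncard hlam i).trans
      (odd_ncard_iff_nonempty (hodd.subsingleton_setOf_eq (odd_two_mul_add_one i)))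
  refine ⟨?_, odd_iff⟩
  rw [hodd.oddParts_eq_ncard, oddParts]
  simp only [odd_iff]

/-- Let `λ` be a partition with no repeated odd part and `ζ = β₁(λ)`
(`ζ_{2i−1} = ⌊(λ_i+1)/2⌋`, `ζ_{2i} = ⌊λ_i/2⌋`).  Then `𝒪(ζ′) = 𝒪(λ)`; indeed
`ζ′_i` is odd if and only if `2i − 1` is a part of `λ` (zero-based: the `i`-th entry
of `ζ′` is odd iff `2i + 1` is a part of `λ`). -/
theorem oddParts_conj_beta_one (lam zeta : ℕ → ℕ)
    (hlam : IsPartitionFun lam) (hodd : NoRepeatedOddPart lam)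
    (hzeta : ∀ i, zeta (2 * i) = (lam i + 1) / 2 ∧ zeta (2 * i + 1) = lam i / 2) :
    oddParts (conjFun zeta) = oddParts lam ∧
    ∀ i : ℕ, Odd (conjFun zeta i) ↔ ∃ j, lam j = 2 * i + 1 :=
  oddParts_conj_beta_one_general hlam.finite_support hodd hzeta
end

section
/- Let ζ be a partition satisfying ζ_{2i−1} − ζ_{2i} ≤ 1 for all i ≥ 1, and let ξ be a partition with all terms even satisfying ξ_{2i} = ξ_{2i+1} for all i ≥ 1. Let π = ζ + ξ be their termwise sum. Then the number of odd parts of the conjugate π′ equals the number of odd parts of ζ′ plus the number of odd parts of ξ′. -/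
/-!
Since `j < f′ k ↔ k < f j`, the term `f′ k` equals `2 i + 1` exactly when
`f (2 i + 1) ≤ k < f (2 i)`. The intervals `[f (2 i + 1), f (2 i))` are pairwise disjoint, so
`𝒪(f′) = ∑ᵢ (f (2 i) - f (2 i + 1))`, the alternating sum of the parts of `f`, which is additive
in `f` because the truncated subtractions are exact for nonincreasing `f`.
-/

open Function Set

theorem ncard_iUnion_eq_finsum {ι α : Type*} {s : ι → Set α} (hs : ∀ i, (s i).Finite)
    (hne : {i | (s i).Nonempty}.Finite) (hd : Pairwise (Disjoint on s)) :
    (⋃ i, s i).ncard = ∑ᶠ i, (s i).ncard := by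
  have hunion : ⋃ i, s i = ⋃ i ∈ {i | (s i).Nonempty}, s i := by
    ext x
    simp
  have hsupport : support (fun i => (s i).ncard) = {i | (s i).Nonempty} := by
    ext i
    simp [ncard_eq_zero (hs i), nonempty_iff_ne_empty]
  rw [hunion, hne.ncard_biUnion (fun i _ => hs i) (hd.set_pairwise _), ← hsupport,
    finsum_mem_support]

namespace IsPartitionFun

variable {f g : ℕ → ℕ}

theorem antitone_s11 (hf : IsPartitionFun f) : Antitone f := fun i j => hf.1 i j

theorem finite_support_s11 (hf : IsPartitionFun f) : f.support.Finite := by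
  obtain ⟨N, hN⟩ := hf.2
  exact (finite_Iio N).subset fun i hi => lt_of_not_ge fun hNi => hi (hN i hNi)

theorem add_s11 (hf : IsPartitionFun f) (hg : IsPartitionFun g) :
    IsPartitionFun fun i => f i + g i := by
  obtain ⟨M, hM⟩ := hf.2
  obtain ⟨N, hN⟩ := hg.2
  refine ⟨fun i j hij => Nat.add_le_add (hf.1 i j hij) (hg.1 i j hij), max M N, fun i hi => ?_⟩
  simp only [hM i (le_of_max_le_left hi), hN i (le_of_max_le_right hi)]

theorem lt_conjFun_iff_s11 (hf : IsPartitionFun f) {j k : ℕ} : j < conjFun f k ↔ k < f j := by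
  have hlower : IsLowerSet {j | k < f j} := fun _ _ hba hk => hk.trans_le (hf.antitone_s11 hba)
  have hfinite : {j | k < f j}.Finite := hf.finite_support_s11.subset fun _ => Nat.ne_zero_of_lt
  obtain huniv | ⟨c, hc⟩ := hlower.eq_univ_or_Iio
  · exact absurd (huniv ▸ hfinite) infinite_univ
  · have hconj : conjFun f k = c := by
      rw [← ncard_Iio_nat c, ← hc]
      rfl
    rw [hconj, ← mem_Iio, ← hc, mem_ofPred_eq]

theorem conjFun_eq_succ_iff_s11 (hf : IsPartitionFun f) {j k : ℕ} :
    conjFun f k = j + 1 ↔ k ∈ Ico (f (j + 1)) (f j) := by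
  rw [mem_Ico, ← not_lt, ← hf.lt_conjFun_iff_s11, ← hf.lt_conjFun_iff_s11]
  omega

theorem setOf_odd_conjFun (hf : IsPartitionFun f) :
    {k | Odd (conjFun f k)} = ⋃ i, Ico (f (2 * i + 1)) (f (2 * i)) := by
  ext k
  simp only [mem_ofPred_eq, mem_iUnion, Odd, hf.conjFun_eq_succ_iff_s11]

theorem finite_support_two_mul_sub (hf : IsPartitionFun f) :
    (support fun i => f (2 * i) - f (2 * i + 1)).Finite := by
  refine (hf.finite_support_s11.preimage (mul_right_injective₀ two_ne_zero).injOn).subset fun i hi => ?_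
  exact Nat.ne_zero_of_lt (Nat.sub_ne_zero_iff_lt.mp hi)

theorem oddParts_conjFun (hf : IsPartitionFun f) :
    oddParts (conjFun f) = ∑ᶠ i, (f (2 * i) - f (2 * i + 1)) := by
  have hdisjoint : Pairwise (Disjoint on fun i => Ico (f (2 * i + 1)) (f (2 * i))) :=
    hf.antitone_s11.pairwise_disjoint_on_Ico_succ.comp_of_injective (mul_right_injective₀ two_ne_zero)
  have hnonempty : {i | (Ico (f (2 * i + 1)) (f (2 * i))).Nonempty}.Finite := by
    simpa only [nonempty_Ico, support, Nat.sub_ne_zero_iff_lt] using hf.finite_support_two_mul_sub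
  rw [oddParts, hf.setOf_odd_conjFun,
    ncard_iUnion_eq_finsum (fun _ => finite_Ico _ _) hnonempty hdisjoint]
  simp only [ncard_Ico_nat]

end IsPartitionFun

theorem oddParts_conj_add_general {f g : ℕ → ℕ} (hf : IsPartitionFun f) (hg : IsPartitionFun g) :
    oddParts (conjFun fun i => f i + g i) = oddParts (conjFun f) + oddParts (conjFun g) := by
  rw [(hf.add_s11 hg).oddParts_conjFun, hf.oddParts_conjFun, hg.oddParts_conjFun,
    ← finsum_add_distrib hf.finite_support_two_mul_sub hg.finite_support_two_mul_sub]
  refine finsum_congr fun i => ?_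
  exact (tsub_add_tsub_comm (hf.antitone_s11 (Nat.le_succ _)) (hg.antitone_s11 (Nat.le_succ _))).symm

/-- Let `ζ` be a partition with `ζ_{2i−1} − ζ_{2i} ≤ 1` for all `i ≥ 1` and let `ξ` be
a partition with all terms even satisfying `ξ_{2i} = ξ_{2i+1}` for all `i ≥ 1`
(zero-based: `ζ(2i) ≤ ζ(2i+1) + 1` and `ξ(2i+1) = ξ(2i+2)`).  If `π = ζ + ξ` is the
termwise sum, then `𝒪(π′) = 𝒪(ζ′) + 𝒪(ξ′)`. -/
theorem oddParts_conj_add (zeta xi : ℕ → ℕ)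
    (hzeta : IsPartitionFun zeta) (hC : ∀ i, zeta (2 * i) ≤ zeta (2 * i + 1) + 1)
    (hxi : IsPartitionFun xi) (hxieven : ∀ i, Even (xi i))
    (hD : ∀ i, xi (2 * i + 1) = xi (2 * i + 2)) :
    oddParts (conjFun (fun i => zeta i + xi i)) =
      oddParts (conjFun zeta) + oddParts (conjFun xi) :=
  oddParts_conj_add_general hzeta hxi
end

section
/- Let ζ be a partition satisfying ζ_{2i−1} − ζ_{2i} ≤ 1 for all i ≥ 1, let ξ be a partition with all terms even satisfying ξ_{2i} = ξ_{2i+1} for all i ≥ 1, and let π = ζ + ξ be their termwise sum. Then for every i ≥ 1, ξ_{2i} = ξ₁ − Σ_{j=1}^{i} (π_{2j−1} − π_{2j}) + Σ_{j=1}^{i} P(π_{2j−1} + π_{2j}), where P(k) = 0 if k is even and P(k) = 1 if k is odd. -/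
/-!
Adding even numbers preserves parity, so the parity of `π_{2j−1} + π_{2j}` is that of
`ζ_{2j−1} − ζ_{2j}`; as this difference is `0` or `1`, it equals that parity. Subtracting it from
`π_{2j−1} − π_{2j}` leaves `ξ_{2j−1} − ξ_{2j}`, and these differences telescope because
`ξ_{2j} = ξ_{2j+1}`.
-/

theorem sum_range_two_mul_sub_two_mul_add_one {G : Type*} [AddCommGroup G] {f : ℕ → G}
    (hf : ∀ j, f (2 * j + 1) = f (2 * j + 2)) (n : ℕ) :
    ∑ j ∈ Finset.range (n + 1), (f (2 * j) - f (2 * j + 1)) = f 0 - f (2 * n + 1) := by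
  simp only [hf]
  exact Finset.sum_range_sub' (fun j ↦ f (2 * j)) (n + 1)

theorem add_add_add_emod_two_eq_sub {x y a b : ℤ} (hyx : y ≤ x) (hxy : x ≤ y + 1)
    (ha : Even a) (hb : Even b) : (x + a + (y + b)) % 2 = x - y := by
  obtain ⟨k, hk⟩ := (ha.add hb).two_dvd
  calc (x + a + (y + b)) % 2 = (x - y + 2 * (y + k)) % 2 := by congr 1; linarith
    _ = (x - y) % 2 := Int.add_mul_emod_self_left _ _ _
    _ = x - y := Int.emod_eq_of_lt (by lia) (by lia)

theorem xi_recovery_general {zeta xi pi : ℕ → ℤ}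
    (hzeta_le : ∀ i, zeta (2 * i + 1) ≤ zeta (2 * i))
    (hzeta_le_add_one : ∀ i, zeta (2 * i) ≤ zeta (2 * i + 1) + 1)
    (hxi_even : ∀ i, Even (xi i)) (hxi_pairs : ∀ i, xi (2 * i + 1) = xi (2 * i + 2))
    (hpi : ∀ i, pi i = zeta i + xi i) (i : ℕ) :
    xi (2 * i + 1) = xi 0
      - ∑ j ∈ Finset.range (i + 1), (pi (2 * j) - pi (2 * j + 1))
      + ∑ j ∈ Finset.range (i + 1), (pi (2 * j) + pi (2 * j + 1)) % 2 := by
  have parity (j : ℕ) : (pi (2 * j) + pi (2 * j + 1)) % 2 = zeta (2 * j) - zeta (2 * j + 1) := by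
    rw [hpi, hpi]
    exact add_add_add_emod_two_eq_sub (hzeta_le j) (hzeta_le_add_one j) (hxi_even _) (hxi_even _)
  have xi_difference (j : ℕ) : xi (2 * j) - xi (2 * j + 1) =
      (pi (2 * j) - pi (2 * j + 1)) - (pi (2 * j) + pi (2 * j + 1)) % 2 := by
    rw [parity, hpi, hpi]
    ring
  calc xi (2 * i + 1)
      = xi 0 - ∑ j ∈ Finset.range (i + 1), (xi (2 * j) - xi (2 * j + 1)) := by
        rw [sum_range_two_mul_sub_two_mul_add_one hxi_pairs, sub_sub_cancel]
    _ = xi 0 - ∑ j ∈ Finset.range (i + 1),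
          ((pi (2 * j) - pi (2 * j + 1)) - (pi (2 * j) + pi (2 * j + 1)) % 2) := by
        simp only [xi_difference]
    _ = _ := by rw [Finset.sum_sub_distrib, sub_add]

/-- Let `ζ` be a partition with `ζ_{2i−1} − ζ_{2i} ≤ 1` for all `i ≥ 1`, let `ξ` be a
partition with all terms even and `ξ_{2i} = ξ_{2i+1}` for all `i ≥ 1`, and let
`π = ζ + ξ` termwise.  Then for every `i ≥ 1`,
`ξ_{2i} = ξ₁ − Σ_{j=1}^{i} (π_{2j−1} − π_{2j}) + Σ_{j=1}^{i} P(π_{2j−1} + π_{2j})`,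
an identity in `ℤ`, where `P(k) = k % 2` is the parity function.  (Zero-based: for
every `i : ℕ`, `ξ(2i+1) = ξ(0) − Σ_{j=0}^{i} (π(2j) − π(2j+1)) + Σ_{j=0}^{i}
(π(2j) + π(2j+1)) % 2`.) -/
theorem xi_recovery (zeta xi : ℕ → ℕ)
    (hzeta : IsPartitionFun zeta) (hC : ∀ i, zeta (2 * i) ≤ zeta (2 * i + 1) + 1)
    (hxi : IsPartitionFun xi) (hxieven : ∀ i, Even (xi i))
    (hD : ∀ i, xi (2 * i + 1) = xi (2 * i + 2))
    (pi : ℕ → ℕ) (hpi : ∀ i, pi i = zeta i + xi i) :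
    ∀ i : ℕ, (xi (2 * i + 1) : ℤ) =
      (xi 0 : ℤ)
        - ∑ j ∈ Finset.range (i + 1), ((pi (2 * j) : ℤ) - (pi (2 * j + 1) : ℤ))
        + ∑ j ∈ Finset.range (i + 1), (((pi (2 * j) + pi (2 * j + 1)) % 2 : ℕ) : ℤ) := by
  exact_mod_cast xi_recovery_general (zeta := (zeta ·)) (xi := (xi ·)) (pi := (pi ·))
    (mod_cast fun i ↦ hzeta.1 _ _ (Nat.le_succ (2 * i))) (mod_cast hC) (mod_cast hxieven)
    (mod_cast hD) (mod_cast hpi)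
end
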